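/- In the diffusive regime 0 ≤ p < 3/4, for any α ∈ (0,1), letting t_{1−α/2} be the (1−α/2)-quantile of the standard Gaussian distribution, the coverage probability ℙ( p ∈ [ p̂_n − t_{1−α/2}·√(3 − 4 p̂_n)/(2√(log n)), p̂_n + t_{1−α/2}·√(3 − 4 p̂_n)/(2√(log n)) ] ) converges to 1 − α as n → ∞. -/

import Mathlib

open MeasureTheory ProbabilityTheory Filter Finset
open scoped BoundedContinuousFunction ENNReal NNReal Topology

noncomputable section

variable {Ω : Type*}

/-- Position of the elephant random walk: `S n = X 1 + ⋯ + X n`. -/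
def erwS (X : ℕ → Ω → ℝ) (n : ℕ) (ω : Ω) : ℝ :=
  ∑ k ∈ Finset.Icc 1 n, X k ω

/-- `V n = 4 ∑_{k=1}^{n-1} (S k / k)²`, the approximate conditional Fisher information. -/
def erwV (X : ℕ → Ω → ℝ) (n : ℕ) (ω : Ω) : ℝ :=
  4 * ∑ k ∈ Finset.Icc 1 (n - 1), (erwS X k ω / k) ^ 2

/-- The quasi-maximum likelihood estimator `p̂ n` of the memory parameter. -/
def erwPhat (X : ℕ → Ω → ℝ) (n : ℕ) (ω : Ω) : ℝ :=
  (∑ k ∈ Finset.Icc 1 (n - 1), (erwS X k ω / k) * (X (k + 1) ω + erwS X k ω / k)) /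
    (2 * ∑ k ∈ Finset.Icc 1 (n - 1), (erwS X k ω / k) ^ 2)

/-- The elephant random walk hypotheses with memory parameter `p ∈ [0,1]`:
the steps take values in `{-1, 1}`, are adapted to the filtration `ℱ`
(which plays the role of `σ(X_1, …, X_n)`), and
`E[X_{n+1} | ℱ_n] = (2p - 1) · S_n / n` almost surely. -/
def IsERW {m0 : MeasurableSpace Ω} (μ : Measure Ω) (ℱ : Filtration ℕ m0)
    (X : ℕ → Ω → ℝ) (p : ℝ) : Prop :=
  0 ≤ p ∧ p ≤ 1 ∧
  (∀ n, 1 ≤ n → ∀ ω, X n ω = 1 ∨ X n ω = -1) ∧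
  (∀ n, 1 ≤ n → Measurable[ℱ n] (X n)) ∧
  (∀ n, 1 ≤ n → μ[X (n + 1) | ℱ n] =ᵐ[μ] fun ω => (2 * p - 1) * (erwS X n ω / n))

set_option linter.unusedSectionVars false
/-! ### Bounded measurable functions -/

/-- Bounded and measurable with respect to a given sigma-algebra. -/
def BM {E : Type*} [RCLike E] (m : MeasurableSpace Ω) (f : Ω → E) : Prop :=
  Measurable[m] f ∧ ∃ C, ∀ ω, ‖f ω‖ ≤ C

namespace BM
variable {E : Type*} [RCLike E] {m : MeasurableSpace Ω} {f g : Ω → E}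

lemma const (c : E) : BM m (fun _ : Ω => c) := ⟨measurable_const, ‖c‖, fun _ => le_rfl⟩

lemma add (hf : BM m f) (hg : BM m g) : BM m (fun ω => f ω + g ω) := by
  obtain ⟨h1, C, hC⟩ := hf
  obtain ⟨h2, D, hD⟩ := hg
  exact ⟨h1.add h2, C + D, fun ω => (norm_add_le _ _).trans (add_le_add (hC ω) (hD ω))⟩

lemma mul (hf : BM m f) (hg : BM m g) : BM m (fun ω => f ω * g ω) := by
  obtain ⟨h1, C, hC⟩ := hf
  obtain ⟨h2, D, hD⟩ := hg
  refine ⟨h1.mul h2, C * D, fun ω => (norm_mul_le _ _).trans ?_⟩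
  exact mul_le_mul (hC ω) (hD ω) (norm_nonneg _) ((norm_nonneg _).trans (hC ω))

lemma sub (hf : BM m f) (hg : BM m g) : BM m (fun ω => f ω - g ω) := by
  obtain ⟨h1, C, hC⟩ := hf
  obtain ⟨h2, D, hD⟩ := hg
  exact ⟨h1.sub h2, C + D, fun ω => (norm_sub_le _ _).trans (add_le_add (hC ω) (hD ω))⟩

lemma cmul (c : E) (hf : BM m f) : BM m (fun ω => c * f ω) := (const c).mul hf

lemma mulc (c : E) (hf : BM m f) : BM m (fun ω => f ω * c) := hf.mul (const c)

lemma divc (c : E) (hf : BM m f) : BM m (fun ω => f ω / c) := by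
  simpa [div_eq_mul_inv] using hf.mulc c⁻¹

lemma pow (hf : BM m f) (n : ℕ) : BM m (fun ω => f ω ^ n) := by
  induction n with
  | zero => simpa using const (m := m) (Ω := Ω) (1 : E)
  | succ n ih => simpa [pow_succ] using ih.mul hf

lemma sum {F : ℕ → Ω → E} {n : ℕ} (h : ∀ k < n, BM m (F k)) :
    BM m (fun ω => ∑ k ∈ range n, F k ω) := by
  induction n with
  | zero => simpa using const (m := m) (Ω := Ω) (0 : E)
  | succ n ih =>
    simp only [sum_range_succ]
    exact (ih fun k hk => h k (by omega)).add (h n (by omega))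

lemma mono {m' : MeasurableSpace Ω} (hf : BM m f) (h : m ≤ m') : BM m' f :=
  ⟨hf.1.mono h le_rfl, hf.2⟩

lemma ofReal {f : Ω → ℝ} (hf : BM m f) : BM m (fun ω => (f ω : ℂ)) := by
  obtain ⟨h1, C, hC⟩ := hf
  exact ⟨Complex.measurable_ofReal.comp h1, C, fun ω => by simpa using hC ω⟩

lemma cexp {f : Ω → ℂ} (hf : BM m f) : BM m (fun ω => Complex.exp (f ω)) := by
  obtain ⟨h1, C, hC⟩ := hf
  refine ⟨Complex.measurable_exp.comp h1, Real.exp C, fun ω => ?_⟩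
  rw [Complex.norm_exp]
  exact Real.exp_le_exp.2 (((le_abs_self _).trans (Complex.abs_re_le_norm _)).trans (hC ω))

lemma rexp {f : Ω → ℝ} (hf : BM m f) : BM m (fun ω => Real.exp (f ω)) := by
  obtain ⟨h1, C, hC⟩ := hf
  refine ⟨Real.measurable_exp.comp h1, Real.exp C, fun ω => ?_⟩
  rw [Real.norm_eq_abs, abs_of_pos (Real.exp_pos _)]
  exact Real.exp_le_exp.2 ((le_abs_self _).trans (hC ω))

lemma rcos {f : Ω → ℝ} (hf : BM m f) : BM m (fun ω => Real.cos (f ω)) :=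
  ⟨Real.measurable_cos.comp hf.1, 1, fun _ => Real.abs_cos_le_one _⟩

lemma rsin {f : Ω → ℝ} (hf : BM m f) : BM m (fun ω => Real.sin (f ω)) :=
  ⟨Real.measurable_sin.comp hf.1, 1, fun _ => Real.abs_sin_le_one _⟩

lemma abs {f : Ω → ℝ} (hf : BM m f) : BM m (fun ω => |f ω|) := by
  obtain ⟨h1, C, hC⟩ := hf
  exact ⟨measurable_norm.comp h1, C, fun ω => by simpa using hC ω⟩

lemma re {f : Ω → ℂ} (hf : BM m f) : BM m (fun ω => (f ω).re) := by
  obtain ⟨h1, C, hC⟩ := hf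
  exact ⟨Complex.measurable_re.comp h1, C, fun ω => (Complex.abs_re_le_norm _).trans (hC ω)⟩

lemma im {f : Ω → ℂ} (hf : BM m f) : BM m (fun ω => (f ω).im) := by
  obtain ⟨h1, C, hC⟩ := hf
  exact ⟨Complex.measurable_im.comp h1, C, fun ω => (Complex.abs_im_le_norm _).trans (hC ω)⟩

lemma int (hf : BM m f) (μ : Measure[m] Ω) [IsFiniteMeasure μ] : Integrable f μ := by
  obtain ⟨h1, C, hC⟩ := hf
  exact Integrable.of_bound h1.aestronglyMeasurable C (ae_of_all _ hC)

end BM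

/-- The abstract setting: `s k = S_{k+1}/(k+1)` and `x k = X_{k+2}`. -/
structure ERWCore {m0 : MeasurableSpace Ω} (μ : Measure Ω) (G : Filtration ℕ m0)
    (s x : ℕ → Ω → ℝ) (a : ℝ) : Prop where
  ha0 : -1 ≤ a
  ha1 : a < 1 / 2
  hx : ∀ k ω, x k ω = 1 ∨ x k ω = -1
  hxm : ∀ k, Measurable[G (k + 1)] (x k)
  hsm : ∀ k, Measurable[G k] (s k)
  hs : ∀ k ω, |s k ω| ≤ 1
  hs0 : ∀ ω, s 0 ω ^ 2 = 1
  hrec : ∀ (k : ℕ) (ω : Ω), ((k : ℝ) + 2) * s (k + 1) ω = ((k : ℝ) + 1) * s k ω + x k ω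
  hce : ∀ k, μ[x k | G k] =ᵐ[μ] fun ω => a * s k ω

namespace ERWCore
variable {m0 : MeasurableSpace Ω} {μ : Measure Ω} [IsProbabilityMeasure μ] {G : Filtration ℕ m0}
    {s x : ℕ → Ω → ℝ} {a : ℝ}

lemma bs (h : ERWCore μ G s x a) {k j : ℕ} (hkj : k ≤ j) : BM (G j) (s k) :=
  BM.mono (m := G k) ⟨h.hsm k, 1, h.hs k⟩ (G.mono hkj)

lemma x2 (h : ERWCore μ G s x a) (k : ℕ) (ω : Ω) : x k ω ^ 2 = 1 := by
  rcases h.hx k ω with h | h <;> rw [h] <;> norm_num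

lemma bx (h : ERWCore μ G s x a) {k j : ℕ} (hkj : k + 1 ≤ j) : BM (G j) (x k) := by
  refine BM.mono (m := G (k + 1)) ⟨h.hxm k, 1, fun ω => ?_⟩ (G.mono hkj)
  rcases h.hx k ω with h | h <;> rw [h] <;> norm_num

lemma key (h : ERWCore μ G s x a) (k : ℕ) {g : Ω → ℝ} (hg : BM (G k) g) :
    ∫ ω, g ω * x k ω ∂μ = ∫ ω, g ω * (a * s k ω) ∂μ := by
  have hxi : Integrable (x k) μ := ((h.bx le_rfl).mono (G.le _)).int μ
  have hgx : Integrable (g * x k) μ :=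
    ((hg.mono (G.le k)).mul ((h.bx le_rfl).mono (G.le _))).int μ
  have h1 := condExp_mul_of_stronglyMeasurable_left (m := G k) (μ := μ)
    hg.1.stronglyMeasurable hgx hxi
  rw [show (∫ ω, g ω * x k ω ∂μ) = ∫ ω, (g * x k) ω ∂μ from rfl, ← integral_condExp (G.le k)]
  refine integral_congr_ae ?_
  filter_upwards [h1, h.hce k] with ω h1 h2
  rw [h1, Pi.mul_apply, h2]

lemma keyC (h : ERWCore μ G s x a) (k : ℕ) {g : Ω → ℂ} (hg : BM (G k) g) :
    ∫ ω, g ω * (x k ω : ℂ) ∂μ = ∫ ω, g ω * ((a * s k ω : ℝ) : ℂ) ∂μ := by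
  have i1 : Integrable (fun ω => g ω * (x k ω : ℂ)) μ :=
    ((hg.mono (G.le k)).mul ((h.bx le_rfl).ofReal.mono (G.le _))).int μ
  have i2 : Integrable (fun ω => g ω * ((a * s k ω : ℝ) : ℂ)) μ :=
    ((hg.mono (G.le k)).mul (((h.bs le_rfl).cmul a).ofReal.mono (G.le k))).int μ
  apply Complex.ext
  · have e1 := integral_re (𝕜 := ℂ) i1
    have e2 := integral_re (𝕜 := ℂ) i2
    have e3 := h.key k hg.re
    simp only [RCLike.re_to_complex, Complex.re_mul_ofReal] at e1 e2
    rw [← e1, ← e2, e3]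
  · have e1 := integral_im (𝕜 := ℂ) i1
    have e2 := integral_im (𝕜 := ℂ) i2
    have e3 := h.key k hg.im
    simp only [RCLike.im_to_complex, Complex.im_mul_ofReal] at e1 e2
    rw [← e1, ← e2, e3]

/-- second moments -/
lemma mom2 (h : ERWCore μ G s x a) (k : ℕ) :
    ∫ ω, s k ω ^ 2 ∂μ ≤ 3 / (1 - 2 * a) / (k + 1) := by
  have hb : 0 < 1 - 2 * a := by linarith [h.ha1]
  have hC : 1 ≤ 3 / (1 - 2 * a) := by rw [le_div_iff₀ hb]; linarith [h.ha0]
  have hCb : 3 / (1 - 2 * a) * (1 - 2 * a) = 3 := by field_simp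
  set C := 3 / (1 - 2 * a)
  induction k with
  | zero => simp [h.hs0, hC]
  | succ k ih =>
    have bsk := (h.bs (le_refl k)).mono (G.le k)
    have bxk := (h.bx (le_refl (k + 1))).mono (G.le _)
    have e1 : ∀ ω, ((k : ℝ) + 2) ^ 2 * s (k + 1) ω ^ 2 =
        (((k : ℝ) + 1) ^ 2 * s k ω ^ 2 + 1) + (2 * ((k : ℝ) + 1) * s k ω) * x k ω := by
      intro ω
      rw [← mul_pow, h.hrec, ← h.x2 k ω]; ring
    have e2 : ((k : ℝ) + 2) ^ 2 * ∫ ω, s (k + 1) ω ^ 2 ∂μ =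
        (((k : ℝ) + 1) ^ 2 + 2 * a * (k + 1)) * ∫ ω, s k ω ^ 2 ∂μ + 1 := by
      rw [← integral_const_mul]
      simp_rw [e1]
      rw [integral_add, integral_add, h.key k ((h.bs le_rfl).cmul _), integral_const_mul]
      · have : ∀ ω, 2 * ((k : ℝ) + 1) * s k ω * (a * s k ω) =
          (2 * a * (k + 1)) * s k ω ^ 2 := fun ω => by ring
        simp_rw [this]
        rw [integral_const_mul]; simp; ring
      · exact ((bsk.pow 2).cmul _).int μ
      · exact (BM.const (1 : ℝ)).int μ
      · exact (((bsk.pow 2).cmul _).add (BM.const (1 : ℝ))).int μ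
      · exact ((bsk.cmul _).mul bxk).int μ
    have hk : (0 : ℝ) ≤ k := Nat.cast_nonneg k
    have hI : 0 ≤ ∫ ω, s k ω ^ 2 ∂μ := integral_nonneg fun ω => sq_nonneg _
    push_cast
    rw [le_div_iff₀ (by linarith)] at ih ⊢
    set I := ∫ ω, s k ω ^ 2 ∂μ
    set J := ∫ ω, s (k + 1) ω ^ 2 ∂μ
    have h3 : (((k : ℝ) + 1) ^ 2 + 2 * a * (k + 1)) * I + 1 ≤ C * (k + 2) := by
      rcases le_or_gt 0 ((k : ℝ) + 1 + 2 * a) with h4 | h4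
      · nlinarith [mul_le_mul_of_nonneg_left ih h4]
      · have : (((k : ℝ) + 1) ^ 2 + 2 * a * (k + 1)) * I ≤ 0 := by
          have : (((k : ℝ) + 1) ^ 2 + 2 * a * (k + 1)) = (k + 1) * (k + 1 + 2 * a) := by ring
          rw [this]
          exact mul_nonpos_of_nonpos_of_nonneg
            (mul_nonpos_of_nonneg_of_nonpos (by linarith) h4.le) hI
        nlinarith
    have h5 : ((k : ℝ) + 2) * (J * (k + 2)) ≤ (k + 2) * C := by nlinarith
    have := le_of_mul_le_mul_left h5 (by linarith)
    convert this using 2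
    ring

/-- fourth moments -/
lemma mom4 (h : ERWCore μ G s x a) : ∃ D : ℝ, 0 ≤ D ∧ ∀ k : ℕ,
    ∫ ω, s k ω ^ 4 ∂μ ≤ D / (k + 1) ^ 2 := by
  have hb : 0 < 1 - 2 * a := by linarith [h.ha1]
  have hC : 1 ≤ 3 / (1 - 2 * a) := by rw [le_div_iff₀ hb]; linarith [h.ha0]
  have hmom := h.mom2
  set C := 3 / (1 - 2 * a)
  set D := 25 + 11 * C / (1 - 2 * a)
  have hDb : 11 * C ≤ D * (1 - 2 * a) := by
    have : D * (1 - 2 * a) = 25 * (1 - 2 * a) + 11 * C := by simp only [D]; field_simp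
    rw [this]; linarith
  have hD0 : 25 ≤ D := by
    have : 0 ≤ 11 * C / (1 - 2 * a) := by positivity
    simp only [D]; linarith
  refine ⟨D, by linarith, fun k => ?_⟩
  have hle1 : ∀ k, ∫ ω, s k ω ^ 4 ∂μ ≤ 1 := by
    intro k
    have : ∫ ω, s k ω ^ 4 ∂μ ≤ ∫ ω, (1 : ℝ) ∂μ := by
      refine integral_mono ((((h.bs (le_refl k)).mono (G.le k)).pow 4).int μ)
        (integrable_const _) fun ω => ?_
      have h1 := abs_le.1 (h.hs k ω)
      have h2 : s k ω ^ 2 ≤ 1 := by nlinarith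
      show s k ω ^ 4 ≤ 1
      nlinarith [sq_nonneg (s k ω)]
    simpa using this
  induction k with
  | zero => simpa using (hle1 0).trans (by linarith)
  | succ k ih =>
    have hk : (0 : ℝ) ≤ k := Nat.cast_nonneg k
    rcases lt_or_ge k 4 with hk4 | hk4
    · have h4 : (k : ℝ) ≤ 3 := by exact_mod_cast Nat.lt_succ_iff.1 hk4
      refine (hle1 _).trans ?_
      rw [le_div_iff₀ (by positivity)]
      push_cast
      nlinarith
    have hk4' : (4 : ℝ) ≤ k := by exact_mod_cast hk4
    have bsk := (h.bs (le_refl k)).mono (G.le k)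
    have bxk := (h.bx (le_refl (k + 1))).mono (G.le _)
    have e1 : ∀ ω, ((k : ℝ) + 2) ^ 4 * s (k + 1) ω ^ 4 =
        ((((k : ℝ) + 1) ^ 4 * s k ω ^ 4 + (6 * ((k : ℝ) + 1) ^ 2) * s k ω ^ 2) + 1)
        + (((4 * ((k : ℝ) + 1) ^ 3) * s k ω ^ 3) + (4 * ((k : ℝ) + 1) * s k ω)) * x k ω := by
      intro ω
      have hx2 := h.x2 k ω
      have hx3 : x k ω ^ 3 = x k ω := by rw [pow_succ, hx2, one_mul]
      have hx4 : x k ω ^ 4 = 1 := by rw [show 4 = 2 * 2 from rfl, pow_mul, hx2, one_pow]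
      rw [← mul_pow, h.hrec]
      linear_combination (6 * ((k : ℝ) + 1) ^ 2 * s k ω ^ 2) * hx2 +
        (4 * ((k : ℝ) + 1) * s k ω) * hx3 + hx4
    have bg : BM (G k) (fun ω =>
        ((4 * ((k : ℝ) + 1) ^ 3) * s k ω ^ 3) + (4 * ((k : ℝ) + 1) * s k ω)) :=
      (((h.bs (le_refl k)).pow 3).cmul _).add ((h.bs (le_refl k)).cmul _)
    have e2 : ((k : ℝ) + 2) ^ 4 * ∫ ω, s (k + 1) ω ^ 4 ∂μ =
        (((k : ℝ) + 1) ^ 4 + 4 * a * (k + 1) ^ 3) * ∫ ω, s k ω ^ 4 ∂μ +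
        (6 * (k + 1) ^ 2 + 4 * a * (k + 1)) * ∫ ω, s k ω ^ 2 ∂μ + 1 := by
      rw [← integral_const_mul]
      simp_rw [e1]
      rw [integral_add, integral_add, integral_add, h.key k bg, integral_const_mul,
        integral_const_mul]
      · have : ∀ ω, (((4 * ((k : ℝ) + 1) ^ 3) * s k ω ^ 3) + (4 * ((k : ℝ) + 1) * s k ω)) *
          (a * s k ω) = (4 * a * (k + 1) ^ 3) * s k ω ^ 4 + (4 * a * (k + 1)) * s k ω ^ 2 :=
            fun ω => by ring
        simp_rw [this]
        rw [integral_add, integral_const_mul, integral_const_mul]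
        · simp; ring
        · exact ((bsk.pow 4).cmul _).int μ
        · exact ((bsk.pow 2).cmul _).int μ
      · exact ((bsk.pow 4).cmul _).int μ
      · exact ((bsk.pow 2).cmul _).int μ
      · exact (((bsk.pow 4).cmul _).add ((bsk.pow 2).cmul _)).int μ
      · exact (BM.const (1 : ℝ)).int μ
      · exact ((((bsk.pow 4).cmul _).add ((bsk.pow 2).cmul _)).add (BM.const (1 : ℝ))).int μ
      · exact ((bg.mono (G.le k)).mul bxk).int μ
    have hI : 0 ≤ ∫ ω, s k ω ^ 2 ∂μ := integral_nonneg fun ω => sq_nonneg _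
    have hm := hmom k
    push_cast
    rw [le_div_iff₀ (by positivity)] at ih hm ⊢
    set I := ∫ ω, s k ω ^ 4 ∂μ
    set J := ∫ ω, s (k + 1) ω ^ 4 ∂μ
    set I2 := ∫ ω, s k ω ^ 2 ∂μ
    set r := (k : ℝ) + 1 with hr
    have hr5 : 5 ≤ r := by linarith
    have f1 : (r ^ 4 + 4 * a * r ^ 3) * I ≤ (r ^ 2 + 4 * a * r) * D := by
      have : 0 ≤ r ^ 2 + 4 * a * r := by nlinarith [h.ha0]
      calc _ = (r ^ 2 + 4 * a * r) * (I * r ^ 2) := by ring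
        _ ≤ _ := mul_le_mul_of_nonneg_left ih this
    have f2 : (6 * r ^ 2 + 4 * a * r) * I2 ≤ (10 * r) * C := by
      have q : 0 ≤ 6 * r + 4 * a := by linarith [h.ha0]
      calc _ = (6 * r + 4 * a) * (I2 * r) := by ring
        _ ≤ (6 * r + 4 * a) * C := mul_le_mul_of_nonneg_left hm q
        _ ≤ _ := mul_le_mul_of_nonneg_right (by linarith [h.ha1]) (by linarith)
    have f3 : ((k : ℝ) + 2) ^ 4 * J ≤ D * (r + 1) ^ 2 := by
      rw [e2]
      have : 11 * C * r ≤ D * (1 - 2 * a) * r := mul_le_mul_of_nonneg_right hDb (by linarith)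
      nlinarith
    have hr2 : (k : ℝ) + 2 = r + 1 := by rw [hr]; ring
    rw [hr2] at f3
    have h5 : (r + 1) ^ 2 * (J * (r + 1) ^ 2) ≤ (r + 1) ^ 2 * D := by nlinarith
    exact le_of_mul_le_mul_left h5 (by positivity)

/-- second moment of martingale transforms -/
lemma momMart (h : ERWCore μ G s x a) {c : ℕ → Ω → ℝ} (hc : ∀ k, BM (G k) (c k)) (n : ℕ) :
    ∫ ω, (∑ k ∈ range n, c k ω * (x k ω - a * s k ω)) ^ 2 ∂μ
      ≤ ∑ k ∈ range n, ∫ ω, c k ω ^ 2 ∂μ := by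
  induction n with
  | zero => simp
  | succ n ih =>
    have bN : BM (G n) (fun ω => ∑ k ∈ range n, c k ω * (x k ω - a * s k ω)) :=
      BM.sum fun k hk => ((hc k).mono (G.mono hk.le)).mul
        ((h.bx hk).sub ((h.bs hk.le).cmul a))
    simp only [sum_range_succ]
    set N := fun ω => ∑ k ∈ range n, c k ω * (x k ω - a * s k ω) with hN
    have bsn := h.bs (le_refl n)
    have b1 : BM (G n) (fun ω => N ω ^ 2 + (c n ω ^ 2 * (1 + (a * s n ω) ^ 2) -
      2 * N ω * c n ω * (a * s n ω))) :=
      (bN.pow 2).add ((((hc n).pow 2).mul ((BM.const 1).add ((bsn.cmul a).pow 2))).sub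
        (((bN.cmul 2).mul (hc n)).mul (bsn.cmul a)))
    have b2 : BM (G n) (fun ω => 2 * N ω * c n ω - 2 * c n ω ^ 2 * (a * s n ω)) :=
      ((bN.cmul 2).mul (hc n)).sub ((((hc n).pow 2).cmul 2).mul (bsn.cmul a))
    have e1 : ∀ ω, (N ω + c n ω * (x n ω - a * s n ω)) ^ 2 =
        (N ω ^ 2 + (c n ω ^ 2 * (1 + (a * s n ω) ^ 2) - 2 * N ω * c n ω * (a * s n ω)))
        + (2 * N ω * c n ω - 2 * c n ω ^ 2 * (a * s n ω)) * x n ω := by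
      intro ω
      have := h.x2 n ω
      linear_combination (c n ω ^ 2) * this
    have e2 : ∫ ω, (N ω + c n ω * (x n ω - a * s n ω)) ^ 2 ∂μ =
        ∫ ω, (N ω ^ 2 + c n ω ^ 2 * (1 - (a * s n ω) ^ 2)) ∂μ := by
      simp_rw [e1]
      rw [integral_add ((b1.mono (G.le n)).int μ)
        (((b2.mono (G.le n)).mul ((h.bx le_rfl).mono (G.le _))).int μ), h.key n b2,
        ← integral_add ((b1.mono (G.le n)).int μ)
        (((b2.mul (bsn.cmul a)).mono (G.le n)).int μ)]
      congr 1
      ext ω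
      ring
    have i1 := ((bN.pow 2).mono (G.le n)).int μ
    have i2 := (((hc n).pow 2).mono (G.le n)).int μ
    calc _ = ∫ ω, (N ω ^ 2 + c n ω ^ 2 * (1 - (a * s n ω) ^ 2)) ∂μ := e2
      _ ≤ ∫ ω, (N ω ^ 2 + c n ω ^ 2) ∂μ := by
        refine integral_mono (((bN.pow 2).add (((hc n).pow 2).mul ((BM.const 1).sub
          ((bsn.cmul a).pow 2)))).mono (G.le n) |>.int μ) (i1.add i2) fun ω => ?_
        show N ω ^ 2 + c n ω ^ 2 * (1 - (a * s n ω) ^ 2) ≤ N ω ^ 2 + c n ω ^ 2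
        nlinarith [mul_nonneg (sq_nonneg (c n ω)) (sq_nonneg (a * s n ω))]
      _ = ∫ ω, N ω ^ 2 ∂μ + ∫ ω, c n ω ^ 2 ∂μ := integral_add i1 i2
      _ ≤ _ := by linarith

lemma harm_lower (m : ℕ) : Real.log ((m : ℝ) + 1) ≤ ∑ k ∈ range m, 1 / ((k : ℝ) + 1) := by
  have := log_add_one_le_harmonic m
  simpa [harmonic] using this

lemma harm_upper (m : ℕ) : ∑ k ∈ range m, 1 / ((k : ℝ) + 1) ≤ 1 + Real.log m := by
  have := harmonic_le_one_add_log m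
  simpa [harmonic] using this

lemma ident (h : ERWCore μ G s x a) (m : ℕ) (ω : Ω) :
    (1 - 2 * a) * ∑ k ∈ range m, s k ω ^ 2 =
      ∑ k ∈ range (m + 1), 1 / ((k : ℝ) + 1) - ((m : ℝ) + 1) * s m ω ^ 2
      + ∑ k ∈ range m, (2 * ((k : ℝ) + 1) / (k + 2) * s k ω) * (x k ω - a * s k ω)
      + (1 - 2 * a) * ∑ k ∈ range m, s k ω ^ 2 / ((k : ℝ) + 2) := by
  induction m with
  | zero => simp [h.hs0]
  | succ m ih =>
    have hm : ((m : ℝ) + 2) ≠ 0 := by positivity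
    have e1 : s (m + 1) ω = (((m : ℝ) + 1) * s m ω + x m ω) / (m + 2) := by
      rw [eq_div_iff hm, mul_comm, h.hrec]
    have hx := h.x2 m ω
    have inc : (1 - 2 * a) * s m ω ^ 2 = 1 / ((m : ℝ) + 2) - ((m : ℝ) + 2) * s (m + 1) ω ^ 2
        + ((m : ℝ) + 1) * s m ω ^ 2
        + (2 * ((m : ℝ) + 1) / (m + 2) * s m ω) * (x m ω - a * s m ω)
        + (1 - 2 * a) * (s m ω ^ 2 / ((m : ℝ) + 2)) := by
      rw [e1]
      field_simp
      linear_combination hx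
    have e2 : (m : ℝ) + 1 + 1 = m + 2 := by ring
    simp only [sum_range_succ] at ih ⊢
    push_cast
    rw [e2]
    linear_combination ih + inc

lemma Qest (h : ERWCore μ G s x a) : ∃ C : ℝ, 0 ≤ C ∧ ∀ m : ℕ, 1 ≤ Real.log ((m : ℝ) + 1) →
    ∫ ω, |(∑ k ∈ range m, s k ω ^ 2) / Real.log ((m : ℝ) + 1) - 1 / (1 - 2 * a)| ∂μ
      ≤ C / √(Real.log ((m : ℝ) + 1)) := by
  have hb : 0 < 1 - 2 * a := by linarith [h.ha1]
  have hC : 1 ≤ 3 / (1 - 2 * a) := by rw [le_div_iff₀ hb]; linarith [h.ha0]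
  have hmom := h.mom2
  set C := 3 / (1 - 2 * a)
  set b := 1 - 2 * a with hbdef
  refine ⟨((1 + C + b * C) + (4 * C + 1)) / b, by positivity, fun m hL => ?_⟩
  set L := Real.log ((m : ℝ) + 1) with hLdef
  have hL0 : 0 < L := by linarith
  have hsq : 0 < √L := Real.sqrt_pos.2 hL0
  have hsq1 : 1 ≤ √L := Real.one_le_sqrt.2 hL
  have hsqL : √L * √L = L := Real.mul_self_sqrt hL0.le
  have bs0 : ∀ k, BM m0 (s k) := fun k => (h.bs (le_refl k)).mono (G.le k)
  have bx0 : ∀ k, BM m0 (x k) := fun k => (h.bx (le_refl (k+1))).mono (G.le _)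
  set N := fun ω => ∑ k ∈ range m, (2 * ((k : ℝ) + 1) / (k + 2) * s k ω) * (x k ω - a * s k ω)
    with hN
  have bN : BM m0 N := BM.sum fun k _ => ((bs0 k).cmul _).mul ((bx0 k).sub ((bs0 k).cmul a))
  have hHm : ∑ k ∈ range m, 1 / ((k : ℝ) + 1) ≤ 2 * L := by
    have h1 := harm_upper m
    have h2 : Real.log m ≤ L := by
      rcases Nat.eq_zero_or_pos m with h0 | h0
      · simp [h0, hLdef]
      · exact Real.log_le_log (by exact_mod_cast h0) (by linarith)
    linarith
  have hN2 : ∫ ω, N ω ^ 2 ∂μ ≤ 8 * C * L := by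
    have h1 := h.momMart (c := fun k ω => 2 * ((k : ℝ) + 1) / (k + 2) * s k ω)
      (fun k => (h.bs le_rfl).cmul _) m
    refine h1.trans ?_
    have h2 : ∀ k ∈ range m, ∫ ω, (2 * ((k : ℝ) + 1) / (k + 2) * s k ω) ^ 2 ∂μ ≤
        4 * C * (1 / ((k : ℝ) + 1)) := by
      intro k _
      simp_rw [mul_pow]
      rw [integral_const_mul]
      have h3 : (2 * ((k : ℝ) + 1) / (k + 2)) ^ 2 ≤ 4 := by
        have : 2 * ((k : ℝ) + 1) / (k + 2) ≤ 2 := by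
          rw [div_le_iff₀ (by positivity)]; linarith
        have h0 : 0 ≤ 2 * ((k : ℝ) + 1) / (k + 2) := by positivity
        nlinarith
      calc _ ≤ 4 * (C / (k + 1)) := mul_le_mul h3 (hmom k)
            (integral_nonneg fun ω => sq_nonneg _) (by norm_num)
        _ = _ := by ring
    refine (sum_le_sum h2).trans ?_
    rw [← mul_sum]
    nlinarith
  have hNabs : ∫ ω, |N ω| ∂μ ≤ (4 * C + 1) * √L := by
    calc ∫ ω, |N ω| ∂μ ≤ ∫ ω, (1 / (2 * √L) * N ω ^ 2 + √L / 2) ∂μ := by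
          refine integral_mono (bN.abs.int μ) ((((bN.pow 2).cmul _).add (BM.const _)).int μ) ?_
          intro ω
          show |N ω| ≤ 1 / (2 * √L) * N ω ^ 2 + √L / 2
          have : 1 / (2 * √L) * N ω ^ 2 + √L / 2 = (|N ω| ^ 2 + √L ^ 2) / (2 * √L) := by
            rw [sq_abs]; field_simp
          rw [this, le_div_iff₀ (by positivity)]
          nlinarith [sq_nonneg (|N ω| - √L)]
      _ = 1 / (2 * √L) * ∫ ω, N ω ^ 2 ∂μ + √L / 2 := by
          rw [integral_add (((bN.pow 2).cmul _).int μ) (integrable_const _), integral_const_mul]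
          simp
      _ ≤ 1 / (2 * √L) * (8 * C * L) + √L / 2 := by gcongr
      _ = 4 * C * √L + √L / 2 := by
          have : 1 / (2 * √L) * (8 * C * (√L * √L)) = 4 * C * √L := by field_simp; ring
          rw [hsqL] at this
          rw [this]
      _ ≤ _ := by linarith
  have hS : ∫ ω, ∑ k ∈ range m, s k ω ^ 2 / ((k : ℝ) + 2) ∂μ ≤ C := by
    rw [integral_finsetSum _ fun k _ => (((bs0 k).pow 2).divc _).int μ]
    have h2 : ∀ k ∈ range m, ∫ ω, s k ω ^ 2 / ((k : ℝ) + 2) ∂μ ≤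
        C * (1 / ((k : ℝ) + 1) - 1 / (((k + 1 : ℕ) : ℝ) + 1)) := by
      intro k _
      rw [integral_div, div_le_iff₀ (by positivity)]
      refine (hmom k).trans (le_of_eq ?_)
      push_cast
      field_simp
      ring
    refine (sum_le_sum h2).trans ?_
    rw [← mul_sum, sum_range_sub' (fun k : ℕ => 1 / ((k : ℝ) + 1))]
    have : 0 ≤ 1 / ((m : ℝ) + 1) := by positivity
    simp only [Nat.cast_zero, zero_add, div_one]
    nlinarith
  have hT : ∫ ω, ((m : ℝ) + 1) * s m ω ^ 2 ∂μ ≤ C := by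
    rw [integral_const_mul]
    have := hmom m
    rw [le_div_iff₀ (by positivity)] at this
    linarith
  have hH : |∑ k ∈ range (m + 1), 1 / ((k : ℝ) + 1) - L| ≤ 1 := by
    have h1 := harm_upper (m + 1)
    have h2 := harm_lower (m + 1)
    push_cast at h1 h2
    have h3 : L ≤ Real.log ((m : ℝ) + 1 + 1) := Real.log_le_log (by positivity) (by linarith)
    rw [abs_le]
    constructor <;> linarith
  have bT : BM m0 (fun ω => ((m : ℝ) + 1) * s m ω ^ 2) := ((bs0 m).pow 2).cmul _
  have bR : BM m0 (fun ω => ∑ k ∈ range m, s k ω ^ 2 / ((k : ℝ) + 2)) :=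
    BM.sum fun k _ => ((bs0 k).pow 2).divc _
  have bQ : BM m0 (fun ω => ∑ k ∈ range m, s k ω ^ 2) := BM.sum fun k _ => (bs0 k).pow 2
  have hpt : ∀ ω, |(∑ k ∈ range m, s k ω ^ 2) / L - 1 / b| ≤
      1 / (b * L) * (((1 + ((m : ℝ) + 1) * s m ω ^ 2) + |N ω|)
        + b * ∑ k ∈ range m, s k ω ^ 2 / ((k : ℝ) + 2)) := by
    intro ω
    have e : (∑ k ∈ range m, s k ω ^ 2) / L - 1 / b =
        1 / (b * L) * (b * (∑ k ∈ range m, s k ω ^ 2) - L) := by field_simp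
    rw [e, abs_mul, abs_of_pos (by positivity : 0 < 1 / (b * L))]
    refine mul_le_mul_of_nonneg_left ?_ (by positivity)
    rw [h.ident m ω]
    have p1 : 0 ≤ ((m : ℝ) + 1) * s m ω ^ 2 := by positivity
    have p2 : 0 ≤ b * ∑ k ∈ range m, s k ω ^ 2 / ((k : ℝ) + 2) := by positivity
    have h1 := abs_le.1 hH
    have h2 := neg_abs_le (N ω)
    have h3 := le_abs_self (N ω)
    have hNω : N ω = ∑ k ∈ range m, (2 * ((k : ℝ) + 1) / (k + 2) * s k ω) *
      (x k ω - a * s k ω) := rfl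
    rw [← hNω, ← hbdef, abs_le]
    constructor <;> linarith
  calc _ ≤ ∫ ω, 1 / (b * L) * (((1 + ((m : ℝ) + 1) * s m ω ^ 2) + |N ω|)
        + b * ∑ k ∈ range m, s k ω ^ 2 / ((k : ℝ) + 2)) ∂μ :=
        integral_mono (((bQ.divc L).sub (BM.const _)).abs.int μ)
          ((((((BM.const 1).add bT).add bN.abs).add (bR.cmul b)).cmul _).int μ) hpt
    _ = 1 / (b * L) * (((1 + ∫ ω, ((m : ℝ) + 1) * s m ω ^ 2 ∂μ) + ∫ ω, |N ω| ∂μ)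
        + b * ∫ ω, ∑ k ∈ range m, s k ω ^ 2 / ((k : ℝ) + 2) ∂μ) := by
        rw [integral_const_mul, integral_add ((((BM.const 1).add bT).add bN.abs).int μ)
          ((bR.cmul b).int μ), integral_add (((BM.const 1).add bT).int μ) (bN.abs.int μ),
          integral_add ((BM.const 1).int μ) (bT.int μ), integral_const_mul b]
        simp
    _ ≤ 1 / (b * L) * (((1 + C) + (4 * C + 1) * √L) + b * C) := by gcongr
    _ ≤ 1 / (b * L) * (((1 + C + b * C) + (4 * C + 1)) * √L) := by
        refine mul_le_mul_of_nonneg_left ?_ (by positivity)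
        have : 0 ≤ 1 + C + b * C := by positivity
        nlinarith
    _ = _ := by
        have : 1 / (b * (√L * √L)) * (((1 + C + b * C) + (4 * C + 1)) * √L) =
          ((1 + C + b * C) + (4 * C + 1)) / b / √L := by field_simp
        rwa [hsqL] at this

lemma step_bound (θ m : ℝ) (hθ : |θ| ≤ 1 / 2) (hm : |m| ≤ 1) :
    ‖Complex.exp (-(((θ * m : ℝ) : ℂ) * Complex.I)) *
        (((Real.cos θ : ℝ) : ℂ) + ((m : ℝ) : ℂ) * (((Real.sin θ : ℝ) : ℂ) * Complex.I)) -
      ((Real.exp (-(θ ^ 2 / 2)) : ℝ) : ℂ)‖ ≤ θ ^ 2 * m ^ 2 + 5 * |θ| ^ 3 := by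
  have hm' := abs_le.1 hm
  have cube : ∀ y : ℝ, |y| ≤ 1 →
      ‖Complex.exp ((y : ℂ) * Complex.I) - (1 + (y : ℂ) * Complex.I - (y : ℂ) ^ 2 / 2)‖
        ≤ 2 / 9 * |y| ^ 3 := by
    intro y hy
    have hn : ‖(y : ℂ) * Complex.I‖ = |y| := by simp
    have := Complex.exp_bound (x := (y : ℂ) * Complex.I) (by rw [hn]; exact hy)
      (n := 3) (by norm_num)
    rw [hn] at this
    simp only [sum_range_succ, Nat.factorial, range_zero, sum_empty] at this
    have e : Complex.exp ((y : ℂ) * Complex.I) - (1 + (y : ℂ) * Complex.I - (y : ℂ) ^ 2 / 2) =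
      Complex.exp ((y : ℂ) * Complex.I) - (0 + ((y : ℂ) * Complex.I) ^ 0 / ((1 : ℕ) : ℂ) +
        ((y : ℂ) * Complex.I) ^ 1 / (((0 + 1) * 1 : ℕ) : ℂ) +
        ((y : ℂ) * Complex.I) ^ 2 / (((1 + 1) * ((0 + 1) * 1) : ℕ) : ℂ)) := by
      rw [mul_pow _ _ 2, Complex.I_sq]; push_cast; ring
    rw [e]
    refine this.trans (le_of_eq ?_)
    push_cast; ring
  have eexp : |Real.exp (-(θ ^ 2 / 2)) - (1 - θ ^ 2 / 2)| ≤ |θ| ^ 3 := by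
    have hθ2 : θ ^ 2 ≤ 1 / 4 := by rw [← sq_abs]; nlinarith [abs_nonneg θ]
    have h1 := Real.abs_exp_sub_one_sub_id_le (x := -(θ ^ 2 / 2)) (by
      rw [abs_neg, abs_of_nonneg (by positivity)]; linarith)
    have e : Real.exp (-(θ ^ 2 / 2)) - (1 - θ ^ 2 / 2) =
      Real.exp (-(θ ^ 2 / 2)) - 1 - (-(θ ^ 2 / 2)) := by ring
    rw [e]
    refine h1.trans ?_
    have : (-(θ ^ 2 / 2)) ^ 2 = |θ| ^ 3 * (|θ| / 4) := by
      have : |θ| ^ 3 * (|θ| / 4) = (|θ| ^ 2) ^ 2 / 4 := by ring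
      rw [this, sq_abs]; ring
    rw [this]
    have := pow_nonneg (abs_nonneg θ) 3
    nlinarith
  have hy1 : |θ * (1 - m)| ≤ 2 * |θ| := by
    rw [abs_mul, mul_comm]
    exact mul_le_mul_of_nonneg_right (by rw [abs_le]; constructor <;> linarith) (abs_nonneg _)
  have hy2 : |-(θ * (1 + m))| ≤ 2 * |θ| := by
    rw [abs_neg, abs_mul, mul_comm]
    exact mul_le_mul_of_nonneg_right (by rw [abs_le]; constructor <;> linarith) (abs_nonneg _)
  have c1 := cube (θ * (1 - m)) (by linarith)
  have c2 := cube (-(θ * (1 + m))) (by linarith)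
  have q1 : |θ * (1 - m)| ^ 3 ≤ 8 * |θ| ^ 3 := by
    calc _ ≤ (2 * |θ|) ^ 3 := pow_le_pow_left₀ (abs_nonneg _) hy1 3
      _ = _ := by ring
  have q2 : |-(θ * (1 + m))| ^ 3 ≤ 8 * |θ| ^ 3 := by
    calc _ ≤ (2 * |θ|) ^ 3 := pow_le_pow_left₀ (abs_nonneg _) hy2 3
      _ = _ := by ring
  set R1 := Complex.exp (((θ * (1 - m) : ℝ) : ℂ) * Complex.I) -
    (1 + ((θ * (1 - m) : ℝ) : ℂ) * Complex.I - ((θ * (1 - m) : ℝ) : ℂ) ^ 2 / 2) with hR1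
  set R2 := Complex.exp (((-(θ * (1 + m)) : ℝ) : ℂ) * Complex.I) -
    (1 + ((-(θ * (1 + m)) : ℝ) : ℂ) * Complex.I - ((-(θ * (1 + m)) : ℝ) : ℂ) ^ 2 / 2) with hR2
  set R3 := Real.exp (-(θ ^ 2 / 2)) - (1 - θ ^ 2 / 2) with hR3
  have main : Complex.exp (-(((θ * m : ℝ) : ℂ) * Complex.I)) *
        (((Real.cos θ : ℝ) : ℂ) + ((m : ℝ) : ℂ) * (((Real.sin θ : ℝ) : ℂ) * Complex.I)) -
      ((Real.exp (-(θ ^ 2 / 2)) : ℝ) : ℂ) =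
      (((1 + m) / 2 : ℝ) : ℂ) * R1 + (((1 - m) / 2 : ℝ) : ℂ) * R2 - (R3 : ℂ)
        + ((θ ^ 2 * m ^ 2 / 2 : ℝ) : ℂ) := by
    have t1 : Complex.exp (((θ * (1 - m) : ℝ) : ℂ) * Complex.I) =
        Complex.exp (-(((θ * m : ℝ) : ℂ) * Complex.I)) * Complex.exp ((θ : ℂ) * Complex.I) := by
      rw [← Complex.exp_add]; congr 1; push_cast; ring
    have t2 : Complex.exp (((-(θ * (1 + m)) : ℝ) : ℂ) * Complex.I) =
        Complex.exp (-(((θ * m : ℝ) : ℂ) * Complex.I)) * Complex.exp (-(θ : ℂ) * Complex.I) := by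
      rw [← Complex.exp_add]; congr 1; push_cast; ring
    rw [hR1, hR2, hR3, t1, t2, Complex.exp_mul_I, Complex.exp_mul_I, Complex.cos_neg,
      Complex.sin_neg]
    push_cast
    ring_nf
  rw [main]
  have n1 : ‖(((1 + m) / 2 : ℝ) : ℂ) * R1‖ ≤ (1 + m) / 2 * (16 / 9 * |θ| ^ 3) := by
    rw [norm_mul, Complex.norm_real, Real.norm_eq_abs, abs_of_nonneg (by linarith)]
    exact mul_le_mul_of_nonneg_left (by linarith) (by linarith)
  have n2 : ‖(((1 - m) / 2 : ℝ) : ℂ) * R2‖ ≤ (1 - m) / 2 * (16 / 9 * |θ| ^ 3) := by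
    rw [norm_mul, Complex.norm_real, Real.norm_eq_abs, abs_of_nonneg (by linarith)]
    exact mul_le_mul_of_nonneg_left (by linarith) (by linarith)
  have n3 : ‖(R3 : ℂ)‖ ≤ |θ| ^ 3 := by rw [Complex.norm_real]; exact eexp
  have n4 : ‖((θ ^ 2 * m ^ 2 / 2 : ℝ) : ℂ)‖ = θ ^ 2 * m ^ 2 / 2 := by
    rw [Complex.norm_real, Real.norm_eq_abs, abs_of_nonneg (by positivity)]
  have p3 := pow_nonneg (abs_nonneg θ) 3
  have p4 : 0 ≤ θ ^ 2 * m ^ 2 := by positivity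
  calc _ ≤ ‖(((1 + m) / 2 : ℝ) : ℂ) * R1‖ + ‖(((1 - m) / 2 : ℝ) : ℂ) * R2‖ + ‖(R3 : ℂ)‖
        + ‖((θ ^ 2 * m ^ 2 / 2 : ℝ) : ℂ)‖ := by
        refine (norm_add_le _ _).trans (add_le_add ?_ le_rfl)
        refine (norm_sub_le _ _).trans (add_le_add ?_ le_rfl)
        exact norm_add_le _ _
    _ ≤ _ := by rw [n4]; nlinarith

/-- Telescoping estimate for the characteristic function of a martingale transform. -/
lemma telescope (h : ERWCore μ G s x a) {c : ℕ → Ω → ℝ} (hc : ∀ k, BM (G k) (c k))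
    (u K : ℝ) (hu : ∀ k ω, |u * c k ω| ≤ 1 / 2)
    (hK : ∀ n ω, ∑ k ∈ range n, c k ω ^ 2 ≤ K) (n : ℕ) :
    ‖∫ ω, Complex.exp (((u * ∑ k ∈ range n, c k ω * (x k ω - a * s k ω) : ℝ) : ℂ) * Complex.I
        + ((u ^ 2 / 2 * ∑ k ∈ range n, c k ω ^ 2 : ℝ) : ℂ)) ∂μ - 1‖
      ≤ Real.exp (u ^ 2 / 2 * K) * ∑ k ∈ range n,
        ∫ ω, ((u * c k ω) ^ 2 * (a * s k ω) ^ 2 + 5 * |u * c k ω| ^ 3) ∂μ := by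
  induction n with
  | zero => simp
  | succ n ih =>
    have bN : BM (G n) (fun ω => ∑ k ∈ range n, c k ω * (x k ω - a * s k ω)) :=
      BM.sum fun k hk => ((hc k).mono (G.mono hk.le)).mul
        ((h.bx hk).sub ((h.bs hk.le).cmul a))
    have bB : BM (G n) (fun ω => ∑ k ∈ range n, c k ω ^ 2) :=
      BM.sum fun k hk => ((hc k).mono (G.mono hk.le)).pow 2
    have bsn := h.bs (le_refl n)
    set N := fun ω => ∑ k ∈ range n, c k ω * (x k ω - a * s k ω) with hN
    set B := fun ω => ∑ k ∈ range n, c k ω ^ 2 with hB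
    set Z := fun ω => Complex.exp (((u * N ω : ℝ) : ℂ) * Complex.I
        + ((u ^ 2 / 2 * B ω : ℝ) : ℂ)) with hZ
    have bZ : BM (G n) Z := (((bN.cmul u).ofReal.mulc _).add ((bB.cmul _).ofReal)).cexp
    set W := fun ω => Z ω * Complex.exp (((u ^ 2 / 2 * c n ω ^ 2 : ℝ) : ℂ)) *
      Complex.exp (((-(u * c n ω * (a * s n ω)) : ℝ) : ℂ) * Complex.I) with hW
    have bW : BM (G n) W := (bZ.mul (((hc n).pow 2).cmul _).ofReal.cexp).mul
      ((((((hc n).cmul u).mul (bsn.cmul a)).cmul (-1)).ofReal.mulc Complex.I).cexp |> fun q => by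
        simpa using q)
    set cs := fun ω => ((Real.cos (u * c n ω) : ℝ) : ℂ) with hcs
    set sn := fun ω => ((Real.sin (u * c n ω) : ℝ) : ℂ) * Complex.I with hsn
    have bcs : BM (G n) cs := ((hc n).cmul u).rcos.ofReal
    have bsn' : BM (G n) sn := ((hc n).cmul u).rsin.ofReal.mulc _
    have bm : BM (G n) (fun ω => ((a * s n ω : ℝ) : ℂ)) := (bsn.cmul a).ofReal
    have e1 : ∀ ω, Complex.exp (((u * ∑ k ∈ range (n + 1), c k ω * (x k ω - a * s k ω) : ℝ) : ℂ)
        * Complex.I + ((u ^ 2 / 2 * ∑ k ∈ range (n + 1), c k ω ^ 2 : ℝ) : ℂ)) =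
        W ω * cs ω + (W ω * sn ω) * (x n ω : ℂ) := by
      intro ω
      have hexp : Complex.exp (((u * c n ω * x n ω : ℝ) : ℂ) * Complex.I) =
          cs ω + sn ω * (x n ω : ℂ) := by
        simp only [hcs, hsn]
        rw [Complex.exp_mul_I]
        rcases h.hx n ω with hx | hx <;> rw [hx]
        · push_cast; simp
        · push_cast; simp
      rw [mul_assoc (W ω), ← mul_add, ← hexp]
      simp only [hW, hZ, hN, hB, sum_range_succ]
      rw [← Complex.exp_add, ← Complex.exp_add, ← Complex.exp_add]
      congr 1
      push_cast
      ring
    have e2 : ∫ ω, Complex.exp (((u * ∑ k ∈ range (n + 1), c k ω * (x k ω - a * s k ω) : ℝ) : ℂ)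
        * Complex.I + ((u ^ 2 / 2 * ∑ k ∈ range (n + 1), c k ω ^ 2 : ℝ) : ℂ)) ∂μ =
        ∫ ω, (W ω * cs ω + (W ω * sn ω) * ((a * s n ω : ℝ) : ℂ)) ∂μ := by
      simp_rw [e1]
      rw [integral_add (((bW.mul bcs).mono (G.le n)).int μ)
        ((((bW.mul bsn').mono (G.le n)).mul ((h.bx le_rfl).ofReal.mono (G.le _))).int μ),
        h.keyC n (bW.mul bsn'),
        ← integral_add (((bW.mul bcs).mono (G.le n)).int μ)
        ((((bW.mul bsn').mul bm).mono (G.le n)).int μ)]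
    have bV : BM (G n) (fun ω => W ω * cs ω + (W ω * sn ω) * ((a * s n ω : ℝ) : ℂ)) :=
      (bW.mul bcs).add ((bW.mul bsn').mul bm)
    set V := fun ω => W ω * cs ω + (W ω * sn ω) * ((a * s n ω : ℝ) : ℂ) with hV
    have bbd : BM (G n) (fun ω => (u * c n ω) ^ 2 * (a * s n ω) ^ 2 + 5 * |u * c n ω| ^ 3) :=
      ((((hc n).cmul u).pow 2).mul ((bsn.cmul a).pow 2)).add
        (((((hc n).cmul u).abs).pow 3).cmul 5)
    have hpt : ∀ ω, ‖V ω - Z ω‖ ≤ Real.exp (u ^ 2 / 2 * K) *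
        ((u * c n ω) ^ 2 * (a * s n ω) ^ 2 + 5 * |u * c n ω| ^ 3) := by
      intro ω
      have hmabs : |a * s n ω| ≤ 1 := by
        rw [abs_mul]
        have h1 : |a| ≤ 1 := abs_le.2 ⟨h.ha0, by linarith [h.ha1]⟩
        exact mul_le_one₀ h1 (abs_nonneg _) (h.hs n ω)
      have hsb := step_bound (u * c n ω) (a * s n ω) (hu n ω) hmabs
      have e3 : V ω - Z ω = (Z ω * Complex.exp (((u ^ 2 / 2 * c n ω ^ 2 : ℝ) : ℂ))) *
        (Complex.exp (-(((u * c n ω * (a * s n ω) : ℝ) : ℂ) * Complex.I)) *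
        (((Real.cos (u * c n ω) : ℝ) : ℂ) + ((a * s n ω : ℝ) : ℂ) *
          (((Real.sin (u * c n ω) : ℝ) : ℂ) * Complex.I)) -
        ((Real.exp (-((u * c n ω) ^ 2 / 2)) : ℝ) : ℂ)) := by
        have e4 : Complex.exp (((u ^ 2 / 2 * c n ω ^ 2 : ℝ) : ℂ)) *
          ((Real.exp (-((u * c n ω) ^ 2 / 2)) : ℝ) : ℂ) = 1 := by
          rw [Complex.ofReal_exp, ← Complex.exp_add, ← Complex.exp_zero]
          congr 1; push_cast; ring
        rw [mul_sub, mul_assoc (Z ω) _ ((Real.exp (-((u * c n ω) ^ 2 / 2)) : ℝ) : ℂ), e4, mul_one]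
        congr 1
        simp only [hV, hW, hcs, hsn]
        rw [show ((-(u * c n ω * (a * s n ω)) : ℝ) : ℂ) * Complex.I =
          -(((u * c n ω * (a * s n ω) : ℝ) : ℂ) * Complex.I) by push_cast; ring]
        ring
      rw [e3, norm_mul]
      refine mul_le_mul ?_ hsb (norm_nonneg _) (Real.exp_pos _).le
      simp only [hZ]
      rw [← Complex.exp_add, Complex.norm_exp]
      refine Real.exp_le_exp.2 ?_
      have hKn := hK (n + 1) ω
      rw [sum_range_succ] at hKn
      have : (((u * N ω : ℝ) : ℂ) * Complex.I + ((u ^ 2 / 2 * B ω : ℝ) : ℂ) +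
        ((u ^ 2 / 2 * c n ω ^ 2 : ℝ) : ℂ)).re = u ^ 2 / 2 * (B ω + c n ω ^ 2) := by
        simp only [Complex.add_re, Complex.ofReal_re, Complex.mul_re, Complex.ofReal_im,
          Complex.I_re, Complex.I_im]
        ring
      rw [this]
      exact mul_le_mul_of_nonneg_left hKn (by positivity)
    have e5 : ‖∫ ω, V ω ∂μ - ∫ ω, Z ω ∂μ‖ ≤ Real.exp (u ^ 2 / 2 * K) *
        ∫ ω, ((u * c n ω) ^ 2 * (a * s n ω) ^ 2 + 5 * |u * c n ω| ^ 3) ∂μ := by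
      rw [← integral_sub ((bV.mono (G.le n)).int μ) ((bZ.mono (G.le n)).int μ),
        ← integral_const_mul]
      exact norm_integral_le_of_norm_le (((bbd.cmul _).mono (G.le n)).int μ) (ae_of_all _ hpt)
    rw [e2, sum_range_succ, mul_add]
    calc _ = ‖(∫ ω, Z ω ∂μ - 1) + (∫ ω, V ω ∂μ - ∫ ω, Z ω ∂μ)‖ := by congr 1; ring
      _ ≤ _ := (norm_add_le _ _).trans (add_le_add ih e5)

lemma abs_exp_sub_le {x y K : ℝ} (hx : x ≤ K) (hy : y ≤ K) :
    |Real.exp x - Real.exp y| ≤ Real.exp K * |x - y| := by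
  wlog hxy : y ≤ x generalizing x y
  · rw [abs_sub_comm, abs_sub_comm x]
    exact this hy hx (le_of_not_ge hxy)
  have h1 : Real.exp y = Real.exp x * Real.exp (y - x) := by rw [← Real.exp_add]; ring_nf
  have h2 := Real.add_one_le_exp (y - x)
  have h3 : Real.exp (y - x) ≤ 1 := Real.exp_le_one_iff.2 (by linarith)
  have h4 : Real.exp x - Real.exp y = Real.exp x * (1 - Real.exp (y - x)) := by rw [h1]; ring
  rw [h4, abs_of_nonneg (mul_nonneg (Real.exp_pos _).le (by linarith)),
    abs_of_nonneg (by linarith : 0 ≤ x - y)]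
  exact mul_le_mul (Real.exp_le_exp.2 hx) (by linarith) (by linarith) (Real.exp_pos _).le

lemma harm2 (m : ℕ) (hL : 1 ≤ Real.log ((m : ℝ) + 1)) :
    ∑ k ∈ range m, 1 / ((k : ℝ) + 1) ≤ 2 * Real.log ((m : ℝ) + 1) := by
  have h1 := harm_upper m
  have h2 : Real.log m ≤ Real.log ((m : ℝ) + 1) := by
    rcases Nat.eq_zero_or_pos m with h0 | h0
    · simp [h0]
    · exact Real.log_le_log (by exact_mod_cast h0) (by linarith)
  linarith

lemma basel (m : ℕ) : ∑ k ∈ range m, 1 / ((k : ℝ) + 1) ^ 2 ≤ 2 := by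
  have h2 : ∀ k ∈ range m, 1 / ((k : ℝ) + 1) ^ 2 ≤
      2 * (1 / ((k : ℝ) + 1) - 1 / (((k + 1 : ℕ) : ℝ) + 1)) := by
    intro k _
    have e : 2 * (1 / ((k : ℝ) + 1) - 1 / (((k + 1 : ℕ) : ℝ) + 1)) =
      2 / (((k : ℝ) + 1) * (k + 2)) := by
      push_cast; field_simp; ring
    rw [e, div_le_div_iff₀ (by positivity) (by positivity)]
    have : (0 : ℝ) ≤ k := Nat.cast_nonneg k
    nlinarith
  refine (sum_le_sum h2).trans ?_
  rw [← mul_sum, sum_range_sub' (fun k : ℕ => 1 / ((k : ℝ) + 1))]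
  have : 0 ≤ 1 / ((m : ℝ) + 1) := by positivity
  simp only [Nat.cast_zero, zero_add, div_one]
  linarith

lemma charlim (h : ERWCore μ G s x a) (u : ℝ) : ∃ C : ℝ, ∀ m : ℕ,
    1 ≤ Real.log ((m : ℝ) + 1) → 2 * |u| ≤ √(Real.log ((m : ℝ) + 1)) →
    ‖(∫ ω, Complex.exp (((u * ((∑ k ∈ range m, s k ω * (x k ω - a * s k ω)) /
        √(Real.log ((m : ℝ) + 1))) : ℝ) : ℂ) * Complex.I) ∂μ) *
        ((Real.exp (u ^ 2 / 2 * (1 / (1 - 2 * a))) : ℝ) : ℂ) - 1‖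
      ≤ C / √(Real.log ((m : ℝ) + 1)) := by
  obtain ⟨C, hC0, hQ⟩ := h.Qest
  obtain ⟨D, hD0, hD⟩ := h.mom4
  have hmom := h.mom2
  have hb : 0 < 1 - 2 * a := by linarith [h.ha1]
  have hA0 : 0 < 3 / (1 - 2 * a) := by positivity
  set A := 3 / (1 - 2 * a)
  set b := 1 - 2 * a with hbdef
  set K := 1 / b + 1 with hKdef
  have hbi : 0 < 1 / b := by positivity
  set E := Real.exp (u ^ 2 / 2 * K) with hE
  have hE0 : 0 < E := Real.exp_pos _
  refine ⟨E * (2 + u ^ 2 / 2) * C + E * (2 * u ^ 2 * D + 10 * |u| ^ 3 * A), fun m hL hu => ?_⟩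
  have hQm := hQ m hL
  have hharm := harm2 m hL
  set L := Real.log ((m : ℝ) + 1) with hLdef
  have hL0 : 0 < L := by linarith
  have hsq : 0 < √L := Real.sqrt_pos.2 hL0
  have hsq1 : 1 ≤ √L := Real.one_le_sqrt.2 hL
  have hsqL : √L * √L = L := Real.mul_self_sqrt hL0.le
  have hsqL2 : √L ^ 2 = L := Real.sq_sqrt hL0.le
  have bs0 : ∀ k, BM m0 (s k) := fun k => (h.bs (le_refl k)).mono (G.le k)
  have bx0 : ∀ k, BM m0 (x k) := fun k => (h.bx (le_refl (k+1))).mono (G.le _)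
  -- truncated coefficients
  set c : ℕ → Ω → ℝ := fun k ω =>
    if ∑ j ∈ range (k + 1), s j ω ^ 2 ≤ K * L then s k ω / √L else 0 with hc
  have hcle : ∀ k ω, |c k ω| ≤ |s k ω| / √L := by
    intro k ω
    simp only [hc]
    split_ifs
    · rw [abs_div, abs_of_pos hsq]
    · simp; positivity
  have hcle1 : ∀ k ω, |c k ω| ≤ 1 / √L := fun k ω =>
    (hcle k ω).trans (div_le_div_of_nonneg_right (h.hs k ω) hsq.le)
  have bc : ∀ k, BM (G k) (c k) := by
    intro k
    refine ⟨?_, 1 / √L, hcle1 k⟩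
    have bq : BM (G k) (fun ω => ∑ j ∈ range (k + 1), s j ω ^ 2) :=
      BM.sum fun j hj => (h.bs (by omega)).pow 2
    exact Measurable.ite (measurableSet_le bq.1 measurable_const)
      ((h.bs le_rfl).divc _).1 measurable_const
  have hcu : ∀ k ω, |u * c k ω| ≤ 1 / 2 := by
    intro k ω
    rw [abs_mul]
    calc |u| * |c k ω| ≤ |u| * (1 / √L) := mul_le_mul_of_nonneg_left (hcle1 k ω) (abs_nonneg _)
      _ ≤ 1 / 2 := by
        rw [mul_one_div, div_le_div_iff₀ hsq (by norm_num)]; linarith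
  have hcK' : ∀ n ω, ∑ k ∈ range n, c k ω ^ 2 ≤ K ∧
      ∑ k ∈ range n, c k ω ^ 2 ≤ (∑ k ∈ range n, s k ω ^ 2) / L := by
    intro n ω
    induction n with
    | zero => simp; positivity
    | succ n ih =>
      have e1 : (∑ k ∈ range (n + 1), s k ω ^ 2) / L =
        (∑ k ∈ range n, s k ω ^ 2) / L + s n ω ^ 2 / L := by rw [sum_range_succ, add_div]
      by_cases hcase : ∑ j ∈ range (n + 1), s j ω ^ 2 ≤ K * L
      · have e2 : c n ω ^ 2 = s n ω ^ 2 / L := by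
          simp only [hc]; rw [if_pos hcase, div_pow, hsqL2]
        have e3 : (∑ k ∈ range (n + 1), s k ω ^ 2) / L ≤ K := by rwa [div_le_iff₀ hL0]
        rw [sum_range_succ, e2]
        constructor <;> linarith [ih.2]
      · have e2 : c n ω = 0 := by simp only [hc]; rw [if_neg hcase]
        have : 0 ≤ s n ω ^ 2 / L := by positivity
        rw [sum_range_succ, e2, e1]
        constructor <;> [linarith [ih.1]; linarith [ih.2]]
  have hcK := fun n ω => (hcK' n ω).1
  have tel := h.telescope bc u K hcu hcK m
  have bN : BM m0 (fun ω => ∑ k ∈ range m, c k ω * (x k ω - a * s k ω)) :=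
    BM.sum fun k _ => ((bc k).mono (G.le k)).mul ((bx0 k).sub ((bs0 k).cmul a))
  have bB : BM m0 (fun ω => ∑ k ∈ range m, c k ω ^ 2) :=
    BM.sum fun k _ => ((bc k).mono (G.le k)).pow 2
  have bM : BM m0 (fun ω => ∑ k ∈ range m, s k ω * (x k ω - a * s k ω)) :=
    BM.sum fun k _ => (bs0 k).mul ((bx0 k).sub ((bs0 k).cmul a))
  have bQ : BM m0 (fun ω => ∑ k ∈ range m, s k ω ^ 2) := BM.sum fun k _ => (bs0 k).pow 2
  -- sum of the errors
  have hterm : ∀ k ∈ range m,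
      ∫ ω, ((u * c k ω) ^ 2 * (a * s k ω) ^ 2 + 5 * |u * c k ω| ^ 3) ∂μ ≤
      u ^ 2 * D / L * (1 / ((k : ℝ) + 1) ^ 2) + 5 * |u| ^ 3 * A / (L * √L) * (1 / ((k : ℝ) + 1)) := by
    intro k _
    have bk := (bc k).mono (G.le k)
    calc _ ≤ ∫ ω, (u ^ 2 / L * s k ω ^ 4 + 5 * |u| ^ 3 / (L * √L) * s k ω ^ 2) ∂μ := by
          refine integral_mono ((((bk.cmul u).pow 2).mul (((bs0 k).cmul a).pow 2)).add
            ((((bk.cmul u).abs).pow 3).cmul 5) |>.int μ)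
            ((((bs0 k).pow 4).cmul _).add (((bs0 k).pow 2).cmul _) |>.int μ) fun ω => ?_
          have h1 := hcle k ω
          have h2 := h.hs k ω
          have ha : a ^ 2 ≤ 1 := by nlinarith [h.ha0, h.ha1]
          have c2 : c k ω ^ 2 ≤ s k ω ^ 2 / L := by
            rw [← sq_abs, ← sq_abs (s k ω), ← hsqL2, ← div_pow]
            exact pow_le_pow_left₀ (abs_nonneg _) h1 2
          have c3 : |c k ω| ^ 3 ≤ s k ω ^ 2 / (L * √L) := by
            calc |c k ω| ^ 3 ≤ (|s k ω| / √L) ^ 3 := pow_le_pow_left₀ (abs_nonneg _) h1 3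
              _ = |s k ω| ^ 2 * |s k ω| / (L * √L) := by
                rw [div_pow]
                congr 1
                rw [pow_succ, hsqL2]
              _ ≤ |s k ω| ^ 2 * 1 / (L * √L) := by gcongr
              _ = _ := by rw [sq_abs, mul_one]
          have f1 : (u * c k ω) ^ 2 * (a * s k ω) ^ 2 ≤ u ^ 2 / L * s k ω ^ 4 := by
            calc _ = u ^ 2 * c k ω ^ 2 * s k ω ^ 2 * a ^ 2 := by ring
              _ ≤ u ^ 2 * (s k ω ^ 2 / L) * s k ω ^ 2 * 1 := by gcongr
              _ = _ := by ring
          have f2 : 5 * |u * c k ω| ^ 3 ≤ 5 * |u| ^ 3 / (L * √L) * s k ω ^ 2 := by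
            rw [abs_mul, mul_pow]
            calc 5 * (|u| ^ 3 * |c k ω| ^ 3) ≤ 5 * (|u| ^ 3 * (s k ω ^ 2 / (L * √L))) := by gcongr
              _ = _ := by ring
          exact add_le_add f1 f2
      _ = u ^ 2 / L * ∫ ω, s k ω ^ 4 ∂μ + 5 * |u| ^ 3 / (L * √L) * ∫ ω, s k ω ^ 2 ∂μ := by
          rw [integral_add ((((bs0 k).pow 4).cmul _).int μ) ((((bs0 k).pow 2).cmul _).int μ),
            integral_const_mul, integral_const_mul]
      _ ≤ u ^ 2 / L * (D / (k + 1) ^ 2) + 5 * |u| ^ 3 / (L * √L) * (A / (k + 1)) := by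
          gcongr
          · exact hD k
          · exact hmom k
      _ = _ := by ring
  have hsum : ∑ k ∈ range m,
      ∫ ω, ((u * c k ω) ^ 2 * (a * s k ω) ^ 2 + 5 * |u * c k ω| ^ 3) ∂μ ≤
      (2 * u ^ 2 * D + 10 * |u| ^ 3 * A) / √L := by
    refine (sum_le_sum hterm).trans ?_
    rw [sum_add_distrib, ← mul_sum, ← mul_sum]
    calc _ ≤ u ^ 2 * D / L * 2 + 5 * |u| ^ 3 * A / (L * √L) * (2 * L) := by
          gcongr
          exact basel m
      _ = 2 * u ^ 2 * D / L + 10 * |u| ^ 3 * A / √L := by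
          congr 1
          · ring
          · field_simp; ring
      _ ≤ 2 * u ^ 2 * D / √L + 10 * |u| ^ 3 * A / √L := by
          gcongr
          nlinarith
      _ = _ := by ring
  -- comparison
  have hpt : ∀ ω, ‖Complex.exp (((u * ((∑ k ∈ range m, s k ω * (x k ω - a * s k ω)) / √L) : ℝ) : ℂ)
        * Complex.I) * ((Real.exp (u ^ 2 / 2 * (1 / b)) : ℝ) : ℂ) -
      Complex.exp (((u * ∑ k ∈ range m, c k ω * (x k ω - a * s k ω) : ℝ) : ℂ) * Complex.I
        + ((u ^ 2 / 2 * ∑ k ∈ range m, c k ω ^ 2 : ℝ) : ℂ))‖ ≤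
      E * (2 + u ^ 2 / 2) * |(∑ k ∈ range m, s k ω ^ 2) / L - 1 / b| := by
    intro ω
    have hu2 : 0 ≤ u ^ 2 / 2 := by positivity
    have g1 : u ^ 2 / 2 * (1 / b) ≤ u ^ 2 / 2 * K :=
      mul_le_mul_of_nonneg_left (by linarith) hu2
    have g2 : u ^ 2 / 2 * ∑ k ∈ range m, c k ω ^ 2 ≤ u ^ 2 / 2 * K :=
      mul_le_mul_of_nonneg_left (hcK m ω) hu2
    rw [Complex.exp_add, ← Complex.ofReal_exp]
    by_cases hcase : ∑ j ∈ range m, s j ω ^ 2 ≤ K * L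
    · have hck : ∀ k ∈ range m, c k ω = s k ω / √L := by
        intro k hk
        simp only [hc]
        rw [if_pos]
        refine le_trans ?_ hcase
        exact sum_le_sum_of_subset_of_nonneg
          (range_subset_range.2 (by simpa using hk)) fun _ _ _ => sq_nonneg _
      have e1 : ∑ k ∈ range m, c k ω * (x k ω - a * s k ω) =
          (∑ k ∈ range m, s k ω * (x k ω - a * s k ω)) / √L := by
        rw [sum_div]
        exact sum_congr rfl fun k hk => by rw [hck k hk]; ring
      have e2 : ∑ k ∈ range m, c k ω ^ 2 = (∑ k ∈ range m, s k ω ^ 2) / L := by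
        rw [sum_div]
        exact sum_congr rfl fun k hk => by rw [hck k hk, div_pow, hsqL2]
      rw [e2] at g2
      rw [e1, e2, ← mul_sub, norm_mul, Complex.norm_exp_ofReal_mul_I, one_mul,
        ← Complex.ofReal_sub, Complex.norm_real, Real.norm_eq_abs]
      refine (abs_exp_sub_le g1 g2).trans ?_
      rw [← mul_sub, abs_mul, abs_of_nonneg hu2, abs_sub_comm, ← hE, ← mul_assoc]
      refine mul_le_mul_of_nonneg_right ?_ (abs_nonneg _)
      exact mul_le_mul_of_nonneg_left (by linarith) hE0.le
    · push Not at hcase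
      have hge : 1 ≤ |(∑ k ∈ range m, s k ω ^ 2) / L - 1 / b| := by
        refine le_trans ?_ (le_abs_self _)
        have : K < (∑ k ∈ range m, s k ω ^ 2) / L := by rwa [lt_div_iff₀ hL0]
        linarith
      refine (norm_sub_le _ _).trans ?_
      rw [norm_mul, norm_mul, Complex.norm_exp_ofReal_mul_I, Complex.norm_exp_ofReal_mul_I,
        one_mul, one_mul, Complex.norm_real, Complex.norm_real, Real.norm_eq_abs,
        Real.norm_eq_abs, abs_of_pos (Real.exp_pos _), abs_of_pos (Real.exp_pos _)]
      have g3 := Real.exp_le_exp.2 g1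
      have g4 := Real.exp_le_exp.2 g2
      calc _ ≤ E + E := add_le_add g3 g4
        _ ≤ E * (2 + u ^ 2 / 2) * 1 := by nlinarith
        _ ≤ _ := by gcongr
  have b1 : BM m0 (fun ω => Complex.exp (((u * ((∑ k ∈ range m,
      s k ω * (x k ω - a * s k ω)) / √L) : ℝ) : ℂ) * Complex.I) *
      ((Real.exp (u ^ 2 / 2 * (1 / b)) : ℝ) : ℂ)) :=
    (((bM.divc _).cmul u).ofReal.mulc _).cexp.mulc _
  have b2 : BM m0 (fun ω => Complex.exp (((u * ∑ k ∈ range m,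
      c k ω * (x k ω - a * s k ω) : ℝ) : ℂ) * Complex.I
        + ((u ^ 2 / 2 * ∑ k ∈ range m, c k ω ^ 2 : ℝ) : ℂ))) :=
    (((bN.cmul u).ofReal.mulc _).add (bB.cmul _).ofReal).cexp
  have hdiff := norm_integral_le_of_norm_le
    ((((bQ.divc L).sub (BM.const (1 / b))).abs.cmul (E * (2 + u ^ 2 / 2))).int μ)
    (ae_of_all μ hpt)
  rw [integral_sub (b1.int μ) (b2.int μ), integral_const_mul] at hdiff
  rw [← integral_mul_const]
  calc _ ≤ _ := norm_sub_le_norm_sub_add_norm_sub _ (∫ ω, Complex.exp (((u * ∑ k ∈ range m,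
      c k ω * (x k ω - a * s k ω) : ℝ) : ℂ) * Complex.I
        + ((u ^ 2 / 2 * ∑ k ∈ range m, c k ω ^ 2 : ℝ) : ℂ)) ∂μ) _
    _ ≤ E * (2 + u ^ 2 / 2) * (C / √L) + E * ((2 * u ^ 2 * D + 10 * |u| ^ 3 * A) / √L) := by
      refine add_le_add (hdiff.trans ?_) (tel.trans ?_)
      · exact mul_le_mul_of_nonneg_left hQm (by positivity)
      · exact mul_le_mul_of_nonneg_left hsum hE0.le
    _ = _ := by ring

lemma Mest (h : ERWCore μ G s x a) : ∃ C : ℝ, ∀ m : ℕ, 1 ≤ Real.log ((m : ℝ) + 1) →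
    ∫ ω, |(∑ k ∈ range m, s k ω * (x k ω - a * s k ω)) / Real.log ((m : ℝ) + 1) - 0| ∂μ
      ≤ C / √(Real.log ((m : ℝ) + 1)) := by
  have hmom := h.mom2
  have hb : 0 < 1 - 2 * a := by linarith [h.ha1]
  have hA0 : 0 < 3 / (1 - 2 * a) := by positivity
  set A := 3 / (1 - 2 * a)
  refine ⟨2 * A + 1, fun m hL => ?_⟩
  have hharm := harm2 m hL
  set L := Real.log ((m : ℝ) + 1) with hLdef
  have hL0 : 0 < L := by linarith
  have hsq : 0 < √L := Real.sqrt_pos.2 hL0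
  have hsqL2 : √L ^ 2 = L := Real.sq_sqrt hL0.le
  have bs0 : ∀ k, BM m0 (s k) := fun k => (h.bs (le_refl k)).mono (G.le k)
  have bx0 : ∀ k, BM m0 (x k) := fun k => (h.bx (le_refl (k+1))).mono (G.le _)
  have bM : BM m0 (fun ω => ∑ k ∈ range m, s k ω * (x k ω - a * s k ω)) :=
    BM.sum fun k _ => (bs0 k).mul ((bx0 k).sub ((bs0 k).cmul a))
  have hM2 : ∫ ω, (∑ k ∈ range m, s k ω * (x k ω - a * s k ω)) ^ 2 ∂μ ≤ A * (2 * L) := by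
    refine (h.momMart (fun k => h.bs le_rfl) m).trans ?_
    calc _ ≤ ∑ k ∈ range m, A * (1 / ((k : ℝ) + 1)) := sum_le_sum fun k _ => by
            rw [mul_one_div]; exact hmom k
      _ ≤ _ := by rw [← mul_sum]; gcongr
  set M := fun ω => ∑ k ∈ range m, s k ω * (x k ω - a * s k ω) with hM
  calc _ ≤ ∫ ω, (1 / (L * √L) * M ω ^ 2 + 1 / √L) ∂μ := by
        refine integral_mono (((bM.divc L).sub (BM.const 0)).abs.int μ)
          ((((bM.pow 2).cmul _).add (BM.const _)).int μ) fun ω => ?_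
        show |M ω / L - 0| ≤ 1 / (L * √L) * M ω ^ 2 + 1 / √L
        rw [sub_zero, abs_div, abs_of_pos hL0]
        have e : 1 / (L * √L) * M ω ^ 2 + 1 / √L = ((|M ω| ^ 2 + √L ^ 2) / √L) / L := by
          rw [sq_abs, hsqL2]; field_simp
        rw [e]
        refine div_le_div_of_nonneg_right ?_ hL0.le
        rw [le_div_iff₀ hsq]
        nlinarith [sq_nonneg (|M ω| - √L), abs_nonneg (M ω)]
    _ = 1 / (L * √L) * ∫ ω, M ω ^ 2 ∂μ + 1 / √L := by
        rw [integral_add (((bM.pow 2).cmul _).int μ) (integrable_const _), integral_const_mul]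
        simp
    _ ≤ 1 / (L * √L) * (A * (2 * L)) + 1 / √L := by gcongr
    _ = _ := by field_simp
end ERWCore

/-! ### Gaussian and convergence-in-measure helpers -/

lemma gauss_symm (s : Set ℝ) (hs : MeasurableSet s) :
    gaussianReal 0 1 ((fun x : ℝ => -x) ⁻¹' s) = gaussianReal 0 1 s := by
  rw [← Measure.map_apply measurable_neg hs, gaussianReal_map_neg, neg_zero]

lemma gauss_abs {α t : ℝ} (hα' : α < 1)
    (ht : ((gaussianReal 0 1) (Set.Iic t)).toReal = 1 - α / 2) :
    ((gaussianReal 0 1) {z | |z| ≤ t}).toReal = 1 - α := by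
  set γ := gaussianReal 0 1 with hγ
  change γ.real (Set.Iic t) = _ at ht
  change γ.real _ = _
  have hIci : γ.real (Set.Ici (-t)) = 1 - α / 2 := by
    rw [← ht, measureReal_def, measureReal_def, ← gauss_symm (Set.Iic t) measurableSet_Iic]
    congr 2
    ext z; simp
  have hIio : γ.real (Set.Iio (-t)) = α / 2 := by
    have := probReal_compl_eq_one_sub (μ := γ) (measurableSet_Ici (a := -t))
    rw [Set.compl_Ici] at this
    rw [this, hIci]; ring
  have ht0 : 0 ≤ t := by
    by_contra hneg
    push Not at hneg
    have hsub : Set.Iic t ⊆ Set.Iio (-t) := fun z hz => by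
      simp only [Set.mem_Iic, Set.mem_Iio] at *; linarith
    have := measureReal_mono (μ := γ) hsub
    rw [ht, hIio] at this
    linarith
  have hu : Set.Iic t = Set.Iio (-t) ∪ {z | |z| ≤ t} := by
    ext z
    simp only [Set.mem_Iic, Set.mem_union, Set.mem_Iio, Set.mem_ofPred_eq, abs_le]
    constructor
    · intro h
      rcases lt_or_ge z (-t) with h1 | h1
      · exact Or.inl h1
      · exact Or.inr ⟨h1, h⟩
    · rintro (h | h)
      · linarith
      · exact h.2
  have hm : MeasurableSet {z : ℝ | |z| ≤ t} :=
    measurableSet_le (by fun_prop) measurable_const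
  have hd : Disjoint (Set.Iio (-t)) {z : ℝ | |z| ≤ t} := by
    rw [Set.disjoint_left]
    intro z h1 h2
    simp only [Set.mem_Iio, Set.mem_ofPred_eq, abs_le] at h1 h2
    linarith
  rw [hu, measureReal_union hd hm, hIio] at ht
  linarith

lemma meas_of_L1 {m0 : MeasurableSpace Ω} {μ : Measure Ω} [IsProbabilityMeasure μ]
    {f : ℕ → Ω → ℝ} {c : ℝ} (hf : ∀ n, BM m0 (f n))
    (hlim : Tendsto (fun n => ∫ ω, |f n ω - c| ∂μ) atTop (𝓝 0)) :
    TendstoInMeasure μ f atTop (fun _ => c) := by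
  refine tendstoInMeasure_of_tendsto_eLpNorm (p := 1) one_ne_zero
    (fun n => (hf n).1.aestronglyMeasurable) aestronglyMeasurable_const ?_
  have h2 : ∀ n, eLpNorm (f n - fun _ => c) 1 μ = ENNReal.ofReal (∫ ω, |f n ω - c| ∂μ) := by
    intro n
    have hi : Integrable (fun ω => f n ω - c) μ := ((hf n).sub (BM.const c)).int μ
    rw [eLpNorm_one_eq_lintegral_enorm]
    change ∫⁻ ω, ‖f n ω - c‖ₑ ∂μ = _
    rw [← ofReal_integral_norm_eq_lintegral_enorm hi]
    rfl
  simp_rw [h2]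
  simpa using ENNReal.tendsto_ofReal hlim

lemma meas_comp2 {m0 : MeasurableSpace Ω} {μ : Measure Ω} {f g : ℕ → Ω → ℝ} {c d : ℝ}
    (hf : TendstoInMeasure μ f atTop (fun _ => c))
    (hg : TendstoInMeasure μ g atTop (fun _ => d))
    {F : ℝ × ℝ → ℝ} (hF : ContinuousAt F (c, d)) :
    TendstoInMeasure μ (fun n ω => F (f n ω, g n ω)) atTop (fun _ => F (c, d)) := by
  rw [tendstoInMeasure_iff_dist] at *
  intro ε hε
  obtain ⟨δ, hδ, hFδ⟩ := Metric.continuousAt_iff.1 hF ε hε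
  have h := (hf δ hδ).add (hg δ hδ)
  rw [add_zero] at h
  refine tendsto_of_tendsto_of_tendsto_of_le_of_le tendsto_const_nhds h (fun _ => zero_le) ?_
  intro n
  refine (measure_mono ?_).trans (measure_union_le _ _)
  intro ω hω
  simp only [Set.mem_ofPred_eq, Set.mem_union] at *
  by_contra hcon
  push Not at hcon
  have : dist ((f n ω, g n ω) : ℝ × ℝ) (c, d) < δ := by
    rw [Prod.dist_eq]; exact max_lt hcon.1 hcon.2
  exact absurd (hFδ this) (not_lt.2 hω)

/-! ### Building the core structure from the elephant random walk -/

lemma abs_erwS_le {X : ℕ → Ω → ℝ} (hX : ∀ n, 1 ≤ n → ∀ ω, X n ω = 1 ∨ X n ω = -1)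
    (n : ℕ) (ω : Ω) : |erwS X n ω| ≤ n := by
  unfold erwS
  refine (Finset.abs_sum_le_sum_abs _ _).trans ?_
  have : ∀ k ∈ Finset.Icc 1 n, |X k ω| ≤ (1 : ℝ) := by
    intro k hk
    rcases hX k (Finset.mem_Icc.1 hk).1 ω with h | h <;> simp [h]
  refine (Finset.sum_le_sum this).trans ?_
  simp

lemma erwS_succ (X : ℕ → Ω → ℝ) (n : ℕ) (ω : Ω) :
    erwS X (n + 1) ω = erwS X n ω + X (n + 1) ω := by
  unfold erwS
  rw [Finset.sum_Icc_succ_top (by omega)]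

/-- The shifted filtration. -/
def shiftFilt {m0 : MeasurableSpace Ω} (ℱ : Filtration ℕ m0) : Filtration ℕ m0 where
  seq k := ℱ (k + 1)
  mono' _ _ h := ℱ.mono (Nat.succ_le_succ h)
  le' k := ℱ.le (k + 1)

lemma measurable_erwS {m0 : MeasurableSpace Ω} {ℱ : Filtration ℕ m0} {X : ℕ → Ω → ℝ}
    (hXm : ∀ n, 1 ≤ n → Measurable[ℱ n] (X n)) (n : ℕ) :
    Measurable[ℱ n] (erwS X n) := by
  unfold erwS
  refine Finset.measurable_fun_sum _ fun k hk => ?_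
  exact (hXm k (Finset.mem_Icc.1 hk).1).mono (ℱ.mono (Finset.mem_Icc.1 hk).2) le_rfl

lemma core_of_erw {m0 : MeasurableSpace Ω} {μ : Measure Ω} [IsProbabilityMeasure μ]
    {ℱ : Filtration ℕ m0} {X : ℕ → Ω → ℝ} {p : ℝ}
    (hERW : IsERW μ ℱ X p) (hp : p < 3 / 4) :
    ERWCore μ (shiftFilt ℱ) (fun k ω => erwS X (k + 1) ω / ((k + 1 : ℕ) : ℝ))
      (fun k => X (k + 2)) (2 * p - 1) := by
  obtain ⟨h0, h1, hX, hXm, hce⟩ := hERW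
  refine ⟨by linarith, by linarith, fun k ω => hX _ (by omega) ω, fun k => hXm _ (by omega),
    fun k => ?_, fun k ω => ?_, fun ω => ?_, fun k ω => ?_, fun k => hce (k + 1) (by omega)⟩
  · exact (measurable_erwS hXm (k + 1)).div_const _
  · rw [abs_div, Nat.abs_cast]
    exact div_le_one_of_le₀ (abs_erwS_le hX _ _) (Nat.cast_nonneg _)
  · rcases hX 1 le_rfl ω with h | h <;> simp [erwS, h]
  · have e1 : (((k + 1 : ℕ)) : ℝ) ≠ 0 := by positivity
    have e2 : (((k + 1 + 1 : ℕ)) : ℝ) ≠ 0 := by positivity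
    rw [erwS_succ X (k + 1)]
    push_cast at *
    field_simp
    ring

lemma sum_Icc_shift (f : ℕ → ℝ) (m : ℕ) :
    ∑ k ∈ Finset.Icc 1 m, f k = ∑ k ∈ range m, f (k + 1) := by
  induction m with
  | zero => simp
  | succ m ih => rw [Finset.sum_Icc_succ_top (by omega), ih, sum_range_succ]

lemma phat_eq {X : ℕ → Ω → ℝ} (p : ℝ) (m : ℕ) (ω : Ω)
    (hQ : 0 < ∑ k ∈ range m, (erwS X (k + 1) ω / ((k + 1 : ℕ) : ℝ)) ^ 2) :
    erwPhat X (m + 1) ω = p + (∑ k ∈ range m, (erwS X (k + 1) ω / ((k + 1 : ℕ) : ℝ)) *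
      (X (k + 2) ω - (2 * p - 1) * (erwS X (k + 1) ω / ((k + 1 : ℕ) : ℝ)))) /
      (2 * ∑ k ∈ range m, (erwS X (k + 1) ω / ((k + 1 : ℕ) : ℝ)) ^ 2) := by
  unfold erwPhat
  rw [Nat.add_sub_cancel, sum_Icc_shift, sum_Icc_shift]
  have : ∑ k ∈ range m, (erwS X (k + 1) ω / ((k + 1 : ℕ) : ℝ)) *
      (X (k + 1 + 1) ω + erwS X (k + 1) ω / ((k + 1 : ℕ) : ℝ)) =
      (∑ k ∈ range m, (erwS X (k + 1) ω / ((k + 1 : ℕ) : ℝ)) *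
      (X (k + 2) ω - (2 * p - 1) * (erwS X (k + 1) ω / ((k + 1 : ℕ) : ℝ)))) +
      2 * p * ∑ k ∈ range m, (erwS X (k + 1) ω / ((k + 1 : ℕ) : ℝ)) ^ 2 := by
    rw [Finset.mul_sum, ← Finset.sum_add_distrib]
    refine Finset.sum_congr rfl fun k _ => ?_
    ring
  rw [this, add_div, add_comm]
  congr 1
  rw [mul_div_mul_comm, mul_div_assoc, div_self hQ.ne']
  ring

/-! ### Distributional limit -/

section limit
variable {m0 : MeasurableSpace Ω} {μ : Measure Ω} [IsProbabilityMeasure μ]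
  {G : Filtration ℕ m0} {s x : ℕ → Ω → ℝ} {a : ℝ}

lemma logTop : Tendsto (fun m : ℕ => Real.log ((m : ℝ) + 1)) atTop atTop :=
  Real.tendsto_log_atTop.comp (tendsto_atTop_add_const_right _ 1 tendsto_natCast_atTop_atTop)

lemma divSqrtLog (C : ℝ) :
    Tendsto (fun m : ℕ => C / √(Real.log ((m : ℝ) + 1))) atTop (𝓝 0) :=
  tendsto_const_nhds.div_atTop (Real.tendsto_sqrt_atTop.comp logTop)

lemma bmQ (h : ERWCore μ G s x a) (m : ℕ) : BM m0 (fun ω => ∑ k ∈ range m, s k ω ^ 2) :=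
  BM.sum fun k _ => ((ERWCore.bs h le_rfl).pow 2).mono (G.le k)

lemma bmM (h : ERWCore μ G s x a) (m : ℕ) :
    BM m0 (fun ω => ∑ k ∈ range m, s k ω * (x k ω - a * s k ω)) :=
  BM.sum fun k _ => ((ERWCore.bs h (Nat.le_succ k)).mul ((ERWCore.bx h le_rfl).sub
    ((ERWCore.bs h (Nat.le_succ k)).cmul a))).mono (G.le (k + 1))

lemma Qlim (h : ERWCore μ G s x a) :
    TendstoInMeasure μ (fun (m : ℕ) ω => (∑ k ∈ range m, s k ω ^ 2) / Real.log ((m : ℝ) + 1))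
      atTop (fun _ => 1 / (1 - 2 * a)) := by
  refine meas_of_L1 (fun m => (bmQ h m).divc _) ?_
  obtain ⟨C, -, hC⟩ := ERWCore.Qest h
  refine tendsto_of_tendsto_of_tendsto_of_le_of_le' tendsto_const_nhds (divSqrtLog C)
    (Eventually.of_forall fun m => integral_nonneg fun ω => abs_nonneg _) ?_
  filter_upwards [logTop.eventually_ge_atTop 1] with m hm using hC m hm

lemma Mlim (h : ERWCore μ G s x a) :
    TendstoInMeasure μ (fun (m : ℕ) ω => (∑ k ∈ range m, s k ω * (x k ω - a * s k ω)) /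
      Real.log ((m : ℝ) + 1)) atTop (fun _ => 0) := by
  refine meas_of_L1 (fun m => (bmM h m).divc _) ?_
  obtain ⟨C, hC⟩ := ERWCore.Mest h
  refine tendsto_of_tendsto_of_tendsto_of_le_of_le' tendsto_const_nhds (divSqrtLog C)
    (Eventually.of_forall fun m => integral_nonneg fun ω => abs_nonneg _) ?_
  filter_upwards [logTop.eventually_ge_atTop 1] with m hm using hC m hm

lemma Wlim (h : ERWCore μ G s x a) :
    TendstoInDistribution (fun (m : ℕ) ω => √(1 - 2 * a) *
      ((∑ k ∈ range m, s k ω * (x k ω - a * s k ω)) / √(Real.log ((m : ℝ) + 1))))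
      atTop (id : ℝ → ℝ) (fun _ => μ) (gaussianReal 0 1) := by
  have hb : 0 < 1 - 2 * a := by have := h.ha1; linarith
  have hW : ∀ m : ℕ, AEMeasurable (fun ω => √(1 - 2 * a) *
      ((∑ k ∈ range m, s k ω * (x k ω - a * s k ω)) / √(Real.log ((m : ℝ) + 1)))) μ :=
    fun m => (((bmM h m).divc _).cmul _).1.aemeasurable
  refine ⟨hW, aemeasurable_id, ?_⟩
  refine ProbabilityMeasure.tendsto_iff_tendsto_charFun.2 fun u => ?_
  obtain ⟨C, hC⟩ := ERWCore.charlim h (u * √(1 - 2 * a))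
  set E : ℂ := ((Real.exp ((u * √(1 - 2 * a))^2/2 * (1/(1-2*a))) : ℝ) : ℂ) with hE
  have hE0 : E ≠ 0 := by
    rw [hE]; exact_mod_cast (Real.exp_pos _).ne'
  have hEv : E⁻¹ = charFun (gaussianReal 0 1) u := by
    rw [hE, charFun_gaussianReal, mul_pow, Real.sq_sqrt hb.le, ← Complex.ofReal_inv,
      ← Real.exp_neg, Complex.ofReal_exp]
    congr 1
    have : u ^ 2 * (1 - 2 * a) / 2 * (1 / (1 - 2 * a)) = u ^ 2 / 2 := by
      field_simp
    rw [this]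
    push_cast
    ring
  simp only [ProbabilityMeasure.coe_mk, Measure.map_id]
  rw [← hEv]
  have key : Tendsto (fun m : ℕ => (∫ ω, Complex.exp ((((u * √(1 - 2 * a)) *
      ((∑ k ∈ range m, s k ω * (x k ω - a * s k ω)) / √(Real.log ((m:ℝ)+1))) : ℝ) : ℂ) *
      Complex.I) ∂μ) * E) atTop (𝓝 1) := by
    rw [tendsto_iff_norm_sub_tendsto_zero]
    refine tendsto_of_tendsto_of_tendsto_of_le_of_le' tendsto_const_nhds (divSqrtLog C)
      (Eventually.of_forall fun m => norm_nonneg _) ?_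
    filter_upwards [logTop.eventually_ge_atTop 1,
      (Real.tendsto_sqrt_atTop.comp logTop).eventually_ge_atTop (2 * |u * √(1 - 2 * a)|)]
      with m hm hm2 using hC m hm hm2
  have key2 := key.mul_const E⁻¹
  rw [one_mul] at key2
  refine key2.congr fun m => ?_
  rw [mul_assoc, mul_inv_cancel₀ hE0, mul_one, charFun_apply_real,
    integral_map (hW m)
      (by fun_prop : Continuous _).aestronglyMeasurable]
  refine integral_congr_ae (Eventually.of_forall fun ω => ?_)
  simp only
  congr 1
  push_cast
  ring

lemma Ylim (h : ERWCore μ G s x a) :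
    TendstoInMeasure μ (fun (m : ℕ) ω => √(1 - 2 * a) *
      (((∑ k ∈ range m, s k ω ^ 2) / Real.log ((m : ℝ) + 1)) *
      √((1 - 2 * a) - 2 * (((∑ k ∈ range m, s k ω * (x k ω - a * s k ω)) /
      Real.log ((m : ℝ) + 1)) / ((∑ k ∈ range m, s k ω ^ 2) / Real.log ((m : ℝ) + 1))))))
      atTop (fun _ => 1) := by
  have hb : 0 < 1 - 2 * a := by have := h.ha1; linarith
  have hF : ContinuousAt (fun z : ℝ × ℝ => √(1 - 2 * a) * (z.1 *
      √((1 - 2 * a) - 2 * (z.2 / z.1)))) (1 / (1 - 2 * a), 0) := by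
    have : ((1 / (1 - 2 * a), 0) : ℝ × ℝ).1 ≠ 0 := (one_div_pos.2 hb).ne'
    exact continuousAt_const.mul (continuousAt_fst.mul (ContinuousAt.sqrt
      (continuousAt_const.sub (continuousAt_const.mul (continuousAt_snd.div continuousAt_fst this)))))
  have := meas_comp2 (Qlim h) (Mlim h) hF
  convert this using 2
  have h2 : √(1 - 2 * a) * √(1 - 2 * a) = 1 - 2 * a := Real.mul_self_sqrt hb.le
  simp only [zero_div, mul_zero, sub_zero]
  rw [mul_left_comm, h2]
  field_simp

lemma event_iff {b M Q L t : ℝ} (hb : 0 < b) (hQ : 0 < Q) (hL : 0 < L) :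
    |M / (2 * Q)| ≤ t * √(b - 2 * (M / Q)) / (2 * √L) ↔
      |√b * (M / √L)| - t * (√b * (Q / L * √(b - 2 * (M / L / (Q / L))))) ≤ 0 := by
  have e : M / L / (Q / L) = M / Q := by field_simp
  rw [e]
  set r := √(b - 2 * (M / Q))
  have hsb : 0 < √b := Real.sqrt_pos.2 hb
  have hsL : 0 < √L := Real.sqrt_pos.2 hL
  have hLL : L = √L * √L := (Real.mul_self_sqrt hL.le).symm
  have h2Q : 0 < 2 * Q := by positivity
  rw [abs_div, abs_of_pos h2Q, abs_mul, abs_div, abs_of_pos hsb, abs_of_pos hsL]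
  have e1 : |M| / (2 * Q) - t * r / (2 * √L) =
      (√L / (2 * Q * √b)) * (√b * (|M| / √L) - t * (√b * (Q / L * r))) := by
    conv_rhs => rw [hLL]
    rw [Real.sqrt_mul_self hsL.le]
    field_simp
  rw [← sub_nonpos, e1]
  have hpos : 0 < √L / (2 * Q * √b) := by positivity
  constructor
  · intro hh
    by_contra hc
    push Not at hc
    exact absurd (mul_pos hpos hc) (not_lt.2 hh)
  · intro hh
    exact mul_nonpos_of_nonneg_of_nonpos hpos.le hh

lemma tendsto_of_distr {ν : Measure ℝ} [IsProbabilityMeasure ν] {f : ℕ → Ω → ℝ} {Z : ℝ → ℝ}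
    (hD : TendstoInDistribution f atTop Z (fun _ => μ) ν) {E : Set ℝ} (hE : MeasurableSet E)
    (hnull : ν (Z ⁻¹' (frontier E)) = 0) :
    Tendsto (fun m => (μ (f m ⁻¹' E)).toReal) atTop (𝓝 (ν (Z ⁻¹' E)).toReal) := by
  have hT : Tendsto (fun m => (μ.map (f m)) E) atTop (𝓝 ((ν.map Z) E)) := by
    refine ProbabilityMeasure.tendsto_measure_of_null_frontier_of_tendsto' hD.tendsto ?_
    change (ν.map Z) (frontier E) = 0
    rw [Measure.map_apply_of_aemeasurable hD.aemeasurable_limit isClosed_frontier.measurableSet]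
    exact hnull
  rw [Measure.map_apply_of_aemeasurable hD.aemeasurable_limit hE] at hT
  simp_rw [fun m => Measure.map_apply_of_aemeasurable (hD.forall_aemeasurable m) hE] at hT
  exact (ENNReal.tendsto_toReal (measure_ne_top _ _)).comp hT

lemma cover (h : ERWCore μ G s x a) {α t : ℝ} (hα' : α < 1)
    (ht : ((gaussianReal 0 1) (Set.Iic t)).toReal = 1 - α / 2) :
    Tendsto (fun m : ℕ => (μ {ω | |√(1 - 2 * a) *
      ((∑ k ∈ range m, s k ω * (x k ω - a * s k ω)) / √(Real.log ((m : ℝ) + 1)))| -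
      t * (√(1 - 2 * a) *
      (((∑ k ∈ range m, s k ω ^ 2) / Real.log ((m : ℝ) + 1)) *
      √((1 - 2 * a) - 2 * (((∑ k ∈ range m, s k ω * (x k ω - a * s k ω)) /
      Real.log ((m : ℝ) + 1)) / ((∑ k ∈ range m, s k ω ^ 2) / Real.log ((m : ℝ) + 1)))))) ≤ 0}).toReal)
      atTop (𝓝 (1 - α)) := by
  have hMm := fun m => (bmM h m).1
  have hQm := fun m => (bmQ h m).1
  have hg : Continuous (fun z : ℝ × ℝ => |z.1| - t * z.2) := by fun_prop
  have hD := (Wlim h).continuous_comp_prodMk_of_tendstoInMeasure_const hg (Ylim h) (fun m => by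
    have h1 := hMm m
    have h2 := hQm m
    refine Measurable.aemeasurable ?_
    exact ((h2.div_const _).mul (((measurable_const.sub (((h1.div_const _).div
      (h2.div_const _)).const_mul 2))).sqrt)).const_mul _)
  have hnull : gaussianReal 0 1 ((fun z : ℝ => |z| - t * 1) ⁻¹' (frontier (Set.Iic (0 : ℝ)))) = 0 := by
    rw [frontier_Iic]
    have : NullSingletonClass (gaussianReal 0 1) := nullSingletonClass_gaussianReal one_ne_zero
    have hfin : ({t, -t} : Set ℝ).Finite := by simp
    refine measure_mono_null (t := {t, -t}) ?_ (hfin.measure_zero _)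
    intro z hz
    simp only [Set.mem_preimage, Set.mem_singleton_iff, mul_one] at hz
    simp only [Set.mem_insert_iff, Set.mem_singleton_iff]
    rcases abs_choice z with h | h <;> rw [h] at hz
    · left; linarith
    · right; linarith
  have hT := tendsto_of_distr hD measurableSet_Iic hnull
  rw [← gauss_abs hα' ht]
  have hset : (fun z : ℝ => |((id z, 1) : ℝ × ℝ).1| - t * ((id z, 1) : ℝ × ℝ).2) ⁻¹' Set.Iic 0 =
      {z | |z| ≤ t} := by
    ext z
    simp
  rw [hset] at hT
  exact hT
end limit
/-- Asymptotic confidence interval in the diffusive regime `0 ≤ p < 3/4`: the coverage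
probability of `[p̂_n ± t_{1-α/2} √(3 - 4 p̂_n) / (2 √(log n))]` converges to `1 - α`. -/
theorem erw_confidence_interval_diffusive
    {m0 : MeasurableSpace Ω} (μ : Measure Ω) [IsProbabilityMeasure μ]
    (ℱ : Filtration ℕ m0) (X : ℕ → Ω → ℝ) (p : ℝ)
    (hERW : IsERW μ ℱ X p) (hp : p < 3 / 4)
    (α t : ℝ) (hα : 0 < α) (hα' : α < 1)
    (ht : ((gaussianReal 0 1) (Set.Iic t)).toReal = 1 - α / 2) :
    Tendsto (fun n => (μ {ω | |erwPhat X n ω - p| ≤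
        t * Real.sqrt (3 - 4 * erwPhat X n ω) / (2 * Real.sqrt (Real.log n))}).toReal)
      atTop (𝓝 (1 - α)) := by
  have h := core_of_erw hERW hp
  have hc := cover h hα' ht
  rw [← tendsto_add_atTop_iff_nat 1]
  refine hc.congr' ?_
  filter_upwards [logTop.eventually_gt_atTop 0, eventually_ge_atTop 1] with m hL hm
  congr 2
  ext ω
  have hQ : 0 < ∑ k ∈ range m, (erwS X (k + 1) ω / ((k + 1 : ℕ) : ℝ)) ^ 2 := by
    refine lt_of_lt_of_le (b := (erwS X (0 + 1) ω / ((0 + 1 : ℕ) : ℝ)) ^ 2) ?_ ?_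
    · have := h.hs0 ω
      rw [this]; exact one_pos
    · exact Finset.single_le_sum
        (f := fun k => (erwS X (k + 1) ω / ((k + 1 : ℕ) : ℝ)) ^ 2)
        (fun k _ => sq_nonneg _) (Finset.mem_range.2 hm)
  have hb : (0 : ℝ) < 1 - 2 * (2 * p - 1) := by linarith
  rw [Set.mem_ofPred_eq, Set.mem_ofPred_eq, ← event_iff hb hQ hL, phat_eq p m ω hQ,
    add_sub_cancel_left, Nat.cast_add, Nat.cast_one]
  have e : ∀ A B : ℝ, 3 - 4 * (p + A / (2 * B)) = 1 - 2 * (2 * p - 1) - 2 * (A / B) := by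
    intro A B
    rw [mul_comm 2 B, ← div_div]; ring
  rw [e]
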